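/- arXiv:1501.02501 — 3 statements merged into one kernel-verified Lean document; each statement's English description precedes it below -/
import Mathlib

section
/- Let H be a real Hilbert space and let f, g : H → ℝ ∪ {+∞} satisfy Assumptions A1–A2 (f, g proper, lower semicontinuous, convex, dom g ⊆ dom f, f Fréchet differentiable on an open set containing dom g, ∇f uniformly continuous on bounded subsets of dom g and mapping bounded subsets of dom g to bounded sets). Let (x^k) and (α_k) be generated by the forward-backward method with Linesearch 1: x⁰ ∈ dom g, σ > 0, θ ∈ (0,1), δ ∈ (0,1/2), α_k the largest α ∈ {σ, σθ, σθ², …} with α‖∇f(J(x^k,α)) − ∇f(x^k)‖ ≤ δ‖J(x^k,α) − x^k‖, and x^{k+1} = J(x^k, α_k). If the set S* of minimizers of f+g is nonempty, then (x^k) converges weakly to a point of S* and lim_{k→∞} (f+g)(x^k) = min_{x∈H} (f+g)(x). -/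
open Set Filter Topology Bornology RealInnerProductSpace

noncomputable section

variable {H : Type*} [NormedAddCommGroup H] [InnerProductSpace ℝ H] [CompleteSpace H]

/-- The effective domain of an extended-real-valued function. -/
def edom (h : H → EReal) : Set H := {x | h x < ⊤}

/-- `h` is a proper, lower semicontinuous, convex extended-real-valued function. -/
def ProperLscConvex (h : H → EReal) : Prop :=
  (∃ x, h x < ⊤) ∧ (∀ x, ⊥ < h x) ∧ LowerSemicontinuous h ∧
    ∀ x y : H, ∀ a b : ℝ, 0 ≤ a → 0 ≤ b → a + b = 1 →
      h (a • x + b • y) ≤ (a : EReal) * h x + (b : EReal) * h y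

/-- `p` is the proximal point `prox_{αg}(z)`, i.e. a minimizer of
`y ↦ g(y) + (1/(2α))‖y - z‖²` (such a minimizer is automatically unique). -/
def IsProxPt (g : H → EReal) (α : ℝ) (z p : H) : Prop :=
  ∀ y : H, g p + (((1 / (2 * α)) * ‖p - z‖ ^ 2 : ℝ) : EReal)
    ≤ g y + (((1 / (2 * α)) * ‖y - z‖ ^ 2 : ℝ) : EReal)

/-- `f` is Fréchet differentiable, with gradient `f'`, on an open set containing `s`
(in particular `f` is finite there). -/
def GradOnOpenSupset (f : H → EReal) (f' : H → H) (s : Set H) : Prop :=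
  ∃ U : Set H, IsOpen U ∧ s ⊆ U ∧
    ∀ x ∈ U, f x ≠ ⊤ ∧ HasGradientAt (fun y => (f y).toReal) (f' x) x

/-- Second half of Assumption A2: `f'` is uniformly continuous on bounded subsets of
`dom g` and maps bounded subsets of `dom g` to bounded sets. -/
def UCBddOnBounded (g : H → EReal) (f' : H → H) : Prop :=
  ∀ A : Set H, A ⊆ edom g → IsBounded A →
    UniformContinuousOn f' A ∧ IsBounded (f' '' A)

/-- The Linesearch-1 acceptance inequality at the point `x` with stepsize `α`. -/
def LS1 (f' : H → H) (J : H → ℝ → H) (δ : ℝ) (x : H) (α : ℝ) : Prop :=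
  α * ‖f' (J x α) - f' x‖ ≤ δ * ‖J x α - x‖

/-- `α` is the output of Linesearch 1 at `x`: the largest element of
`{σ, σθ, σθ², …}` satisfying the acceptance inequality. -/
def LS1Step (f' : H → H) (J : H → ℝ → H) (δ σ θ : ℝ) (x : H) (α : ℝ) : Prop :=
  ∃ n : ℕ, α = σ * θ ^ n ∧ LS1 f' J δ x α ∧
    ∀ m : ℕ, m < n → ¬ LS1 f' J δ x (σ * θ ^ m)

/-- The set of minimizers `S⁎` of `f + g` over `H`. -/
def argminSet (f g : H → EReal) : Set H := {x | ∀ y, f x + g x ≤ f y + g y}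

/-- The Linesearch-2 acceptance inequality at `x` (with `Jx = prox_g(x - ∇f(x))`)
with stepsize `β`. -/
def LS2Ineq (f g : H → EReal) (f' : H → H) (x Jx : H) (β : ℝ) : Prop :=
  f (x - β • (x - Jx)) + g (x - β • (x - Jx)) ≤
    f x + g x - (β : EReal) * (g x - g Jx)
      - ((β * ⟪f' x, x - Jx⟫ : ℝ) : EReal) + (((β / 2) * ‖x - Jx‖ ^ 2 : ℝ) : EReal)

/-- `v` belongs to the convex subdifferential `∂h(y)`. -/
def InSubdiff (h : H → EReal) (y v : H) : Prop :=
  ∀ z : H, ((⟪v, z - y⟫ : ℝ) : EReal) ≤ h z - h y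

/-- `h` is strongly convex with modulus `μ`. -/
def StrongConvexWith (h : H → EReal) (μ : ℝ) : Prop :=
  ∀ x y v : H, InSubdiff h y v →
    h y + ((⟪v, x - y⟫ : ℝ) : EReal) + (((μ / 2) * ‖x - y‖ ^ 2 : ℝ) : EReal) ≤ h x

lemma step_mono {u v : H} {α β : ℝ} (hα : 0 < α) (hαβ : α ≤ β)
    (h : β * (‖u‖ ^ 2 - ⟪u, v⟫) + α * (‖v‖ ^ 2 - ⟪u, v⟫) ≤ 0) :
    ‖u‖ ≤ ‖v‖ ∧ α * ‖v‖ ≤ β * ‖u‖ := by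
  have h1 := real_inner_le_norm u v
  have hu := norm_nonneg u
  have hv := norm_nonneg v
  have hβ : 0 < β := by linarith
  have h2 : (‖u‖ - ‖v‖) * (β * ‖u‖ - α * ‖v‖) ≤ 0 := by
    nlinarith [mul_le_mul_of_nonneg_left h1 (add_pos hα hβ).le]
  constructor
  · by_contra hc
    push Not at hc
    have : 0 < β * ‖u‖ - α * ‖v‖ := by
      nlinarith [mul_le_mul_of_nonneg_right hαβ hv, mul_lt_mul_of_pos_left hc hβ]
    nlinarith [mul_pos (sub_pos.2 hc) this]
  · by_contra hc
    push Not at hc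
    have : 0 < ‖v‖ - ‖u‖ := by
      by_contra h4
      push Not at h4
      nlinarith [mul_le_mul_of_nonneg_right hαβ hu, mul_le_mul_of_nonneg_left h4 hα.le]
    nlinarith [mul_pos this (sub_pos.2 hc)]

lemma core_step (D : Set H) (fr gr : H → ℝ) (f' : H → H) (J : H → ℝ → H) (δ : ℝ)
    (hG : ∀ x ∈ D, ∀ y ∈ D, fr x + ⟪f' x, y - x⟫ ≤ fr y)
    (hJD : ∀ x ∈ D, ∀ α : ℝ, 0 < α → J x α ∈ D)
    (hP : ∀ x ∈ D, ∀ α : ℝ, 0 < α → ∀ y ∈ D,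
      ⟪x - J x α, y - J x α⟫ - α * ⟪f' x, y - J x α⟫ ≤ α * (gr y - gr (J x α)))
    (x : H) (hx : x ∈ D) (α : ℝ) (hα : 0 < α) (hls : LS1 f' J δ x α) (y : H) (hy : y ∈ D) :
    α * ((fr (J x α) + gr (J x α)) - (fr y + gr y)) ≤
      - ⟪x - J x α, y - J x α⟫ + δ * ‖x - J x α‖ ^ 2 := by
  have hpD := hJD x hx α hα
  have h1 := hP x hx α hα y hy
  unfold LS1 at hls
  generalize J x α = p at *
  have h2 := hG x hx y hy
  have h3 := hG p hpD x hx
  have h4 : ⟪f' p, x - p⟫ = - ⟪f' p - f' x, p - x⟫ - ⟪f' x, p - x⟫ := by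
    simp only [inner_sub_left, inner_sub_right]; ring
  have h5 : ⟪f' x, y - p⟫ = ⟪f' x, y - x⟫ - ⟪f' x, p - x⟫ := by
    simp only [inner_sub_right]; ring
  have h6 := real_inner_le_norm (f' p - f' x) (p - x)
  have h7 : α * ⟪f' p - f' x, p - x⟫ ≤ δ * ‖x - p‖ ^ 2 := by
    rw [norm_sub_rev x p]
    nlinarith [mul_le_mul_of_nonneg_left h6 hα.le,
      mul_le_mul_of_nonneg_right hls (norm_nonneg (p - x))]
  rw [h5] at h1
  rw [h4] at h3
  nlinarith [mul_le_mul_of_nonneg_left h2 hα.le, mul_le_mul_of_nonneg_left h3 hα.le]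

set_option maxHeartbeats 1000000 in
lemma core (D : Set H) (fr gr : H → ℝ) (f' : H → H) (J : H → ℝ → H) (σ θ δ : ℝ)
    (hG : ∀ x ∈ D, ∀ y ∈ D, fr x + ⟪f' x, y - x⟫ ≤ fr y)
    (hJD : ∀ x ∈ D, ∀ α : ℝ, 0 < α → J x α ∈ D)
    (hP : ∀ x ∈ D, ∀ α : ℝ, 0 < α → ∀ y ∈ D,
      ⟪x - J x α, y - J x α⟫ - α * ⟪f' x, y - J x α⟫ ≤ α * (gr y - gr (J x α)))
    (hUC : ∀ A : Set H, A ⊆ D → IsBounded A → UniformContinuousOn f' A)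
    (hσ : 0 < σ) (hθ : θ ∈ Set.Ioo (0 : ℝ) 1)
    (hδ : δ ∈ Set.Ioo (0 : ℝ) (1 / 2))
    (x : ℕ → H) (a : ℕ → ℝ)
    (hx0 : x 0 ∈ D)
    (hls : ∀ k : ℕ, LS1Step f' J δ σ θ (x k) (a k))
    (hiter : ∀ k : ℕ, x (k + 1) = J (x k) (a k))
    (s : H) (hs : s ∈ D) (hmin : ∀ y ∈ D, fr s + gr s ≤ fr y + gr y) :
    (∀ k, x k ∈ D) ∧ (∃ l, Tendsto (fun k => ‖x k - s‖ ^ 2) atTop (nhds l)) ∧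
      (∀ k, ‖x k - s‖ ≤ ‖x 0 - s‖) ∧
      Tendsto (fun k => fr (x k) + gr (x k)) atTop (nhds (fr s + gr s)) := by
  obtain ⟨hθ0, hθ1⟩ := hθ
  obtain ⟨hδ0, hδ1⟩ := hδ
  have ha : ∀ k, 0 < a k := by
    intro k
    obtain ⟨n, hn, -⟩ := hls k
    rw [hn]; positivity
  have hxD : ∀ k, x k ∈ D := by
    intro k
    induction k with
    | zero => exact hx0
    | succ k ih => rw [hiter]; exact hJD _ ih _ (ha k)
  have hstep : ∀ k, ∀ y ∈ D, a k * ((fr (x (k+1)) + gr (x (k+1))) - (fr y + gr y)) ≤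
      - ⟪x k - x (k+1), y - x (k+1)⟫ + δ * ‖x k - x (k+1)‖ ^ 2 := by
    intro k y hy
    obtain ⟨n, -, hl, -⟩ := hls k
    rw [hiter k]
    exact core_step D fr gr f' J δ hG hJD hP _ (hxD k) _ (ha k) hl y hy
  have hmono : Antitone (fun k => fr (x k) + gr (x k)) := by
    apply antitone_nat_of_succ_le
    intro k
    have h := hstep k (x k) (hxD k)
    rw [real_inner_self_eq_norm_sq] at h
    have h2 : a k * ((fr (x (k+1)) + gr (x (k+1))) - (fr (x k) + gr (x k))) ≤ 0 := by
      nlinarith [sq_nonneg ‖x k - x (k+1)‖]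
    by_contra hc
    push Not at hc
    nlinarith [mul_pos (ha k) (sub_pos.2 hc)]
  have hfej : ∀ k, 2 * (a k * ((fr (x (k+1)) + gr (x (k+1))) - (fr s + gr s)))
      + (1 - 2 * δ) * ‖x k - x (k+1)‖ ^ 2 ≤ ‖x k - s‖ ^ 2 - ‖x (k+1) - s‖ ^ 2 := by
    intro k
    have h := hstep k s hs
    have e : x k - s = (x k - x (k+1)) - (s - x (k+1)) := by abel
    have e2 := norm_sub_sq_real (x k - x (k+1)) (s - x (k+1))
    rw [← e, norm_sub_rev s (x (k+1))] at e2
    linarith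
  have hF : ∀ k, 0 ≤ a k * ((fr (x (k+1)) + gr (x (k+1))) - (fr s + gr s)) := fun k =>
    mul_nonneg (ha k).le (sub_nonneg.2 (hmin _ (hxD _)))
  have hdanti : Antitone (fun k => ‖x k - s‖ ^ 2) := by
    apply antitone_nat_of_succ_le
    intro k
    nlinarith [hfej k, hF k, sq_nonneg ‖x k - x (k+1)‖]
  obtain ⟨l, hl⟩ : ∃ l, Tendsto (fun k => ‖x k - s‖ ^ 2) atTop (nhds l) := by
    refine ⟨_, tendsto_atTop_ciInf hdanti ⟨0, ?_⟩⟩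
    rintro _ ⟨k, rfl⟩
    positivity
  have hbd : ∀ k, ‖x k - s‖ ≤ ‖x 0 - s‖ := fun k =>
    (sq_le_sq₀ (norm_nonneg _) (norm_nonneg _)).1 (hdanti (Nat.zero_le k))
  refine ⟨hxD, ⟨l, hl⟩, hbd, ?_⟩
  have hdiff0 : Tendsto (fun k => ‖x k - s‖ ^ 2 - ‖x (k+1) - s‖ ^ 2) atTop (nhds 0) := by
    simpa using hl.sub (hl.comp (tendsto_add_atTop_nat 1))
  have key : ∀ ε > 0, ∃ k, fr (x k) + gr (x k) < fr s + gr s + ε := by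
    intro ε hε
    by_contra hc
    push Not at hc
    set d := ‖x 0 - s‖ with hd
    have hd0 : 0 ≤ d := norm_nonneg _
    set M := 2 * d + 1 with hM
    have hM0 : 0 < M := by positivity
    set A := D ∩ Metric.closedBall s (d + 2 * d / θ) with hA
    have hUA := hUC A inter_subset_left (Metric.isBounded_closedBall.subset inter_subset_right)
    rw [Metric.uniformContinuousOn_iff] at hUA
    obtain ⟨r, hr, hUA⟩ := hUA (ε * θ * δ / M) (by positivity)
    have e1 : ∀ᶠ k in atTop, ‖x k - s‖ ^ 2 - ‖x (k+1) - s‖ ^ 2 < 2 * ε * σ :=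
      hdiff0.eventually_lt_const (by positivity)
    have e2 : ∀ᶠ k in atTop, ‖x k - s‖ ^ 2 - ‖x (k+1) - s‖ ^ 2 < (1 - 2 * δ) * (θ * r) ^ 2 :=
      hdiff0.eventually_lt_const (mul_pos (by linarith) (by positivity))
    obtain ⟨k, hk1, hk2⟩ := (e1.and e2).exists
    have hak : a k < σ := by
      have := hfej k
      have h2 := mul_le_mul_of_nonneg_left (hc (k+1)) (ha k).le
      have h3 : 0 ≤ (1 - 2 * δ) * ‖x k - x (k+1)‖ ^ 2 := mul_nonneg (by linarith) (sq_nonneg _)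
      have h4 : a k * ε < σ * ε := by nlinarith
      exact lt_of_mul_lt_mul_right h4 hε.le
    have hxk : ‖x k - x (k+1)‖ < θ * r := by
      have h1 : (1 - 2 * δ) * ‖x k - x (k+1)‖ ^ 2 < (1 - 2 * δ) * (θ * r) ^ 2 := by
        linarith [hfej k, hF k]
      have h2 := lt_of_mul_lt_mul_left h1 (by linarith)
      exact (sq_lt_sq₀ (norm_nonneg _) (by positivity)).1 h2
    obtain ⟨n, hn, -, hfail⟩ := hls k
    obtain ⟨m, rfl⟩ : ∃ m, n = m + 1 := by
      cases n with
      | zero => simp at hn; linarith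
      | succ m => exact ⟨m, rfl⟩
    set β := σ * θ ^ m with hβ
    have hβ0 : 0 < β := by positivity
    have hab : a k = θ * β := by rw [hn, hβ, pow_succ]; ring
    have hf1 := hfail m (Nat.lt_succ_self m)
    rw [← hβ] at hf1
    unfold LS1 at hf1
    push Not at hf1
    have p1 := hP _ (hxD k) _ (ha k) (J (x k) β) (hJD _ (hxD k) _ hβ0)
    have p2 := hP _ (hxD k) _ hβ0 (x (k+1)) (hxD _)
    rw [← hiter k] at p1
    have hqD := hJD _ (hxD k) _ hβ0
    generalize J (x k) β = q at *
    have hsm := step_mono (u := x k - x (k+1)) (v := x k - q) (α := a k) (β := β) (ha k)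
      (by rw [hab]; nlinarith) (by
        have q1 : ⟪x k - x (k+1), q - x (k+1)⟫ =
            ‖x k - x (k+1)‖ ^ 2 - ⟪x k - x (k+1), x k - q⟫ := by
          rw [← real_inner_self_eq_norm_sq, ← inner_sub_right]; congr 1; abel
        have q2 : ⟪x k - q, x (k+1) - q⟫ =
            ‖x k - q‖ ^ 2 - ⟪x k - x (k+1), x k - q⟫ := by
          rw [← real_inner_self_eq_norm_sq, real_inner_comm (x k - q) (x k - x (k+1)),
            ← inner_sub_right]; congr 1; abel
        have q3 : ⟪f' (x k), x (k+1) - q⟫ = - ⟪f' (x k), q - x (k+1)⟫ := by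
          rw [← inner_neg_right]; congr 1; abel
        rw [q1] at p1
        rw [q2, q3] at p2
        nlinarith [mul_le_mul_of_nonneg_left p1 hβ0.le, mul_le_mul_of_nonneg_left p2 (ha k).le])
    obtain ⟨s1, s2⟩ := hsm
    have s3 : θ * ‖x k - q‖ ≤ ‖x k - x (k+1)‖ := by
      rw [hab] at s2
      have : β * (θ * ‖x k - q‖) ≤ β * ‖x k - x (k+1)‖ := by linarith
      exact le_of_mul_le_mul_left this hβ0
    have s4 : ‖x k - q‖ < r := by
      have : θ * ‖x k - q‖ < θ * r := by linarith
      exact lt_of_mul_lt_mul_left this hθ0.le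
    have s5 : ‖x k - x (k+1)‖ ≤ 2 * d := by
      have h1 := norm_sub_le_norm_sub_add_norm_sub (x k) s (x (k+1))
      rw [norm_sub_rev s] at h1
      linarith [hbd k, hbd (k+1)]
    have s6 : ‖x k - q‖ ≤ 2 * d / θ := by
      rw [le_div_iff₀ hθ0]; linarith
    have hxA : x k ∈ A := ⟨hxD k, by
      rw [Metric.mem_closedBall, dist_eq_norm]
      have : 0 ≤ 2 * d / θ := by positivity
      linarith [hbd k]⟩
    have hqA : q ∈ A := ⟨hqD, by
      rw [Metric.mem_closedBall, dist_eq_norm]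
      have h1 := norm_sub_le_norm_sub_add_norm_sub q (x k) s
      rw [norm_sub_rev q (x k)] at h1
      linarith [hbd k]⟩
    have hη := hUA q hqA (x k) hxA (by rw [dist_eq_norm, norm_sub_rev]; exact s4)
    rw [dist_eq_norm] at hη
    have t1 := hstep k s hs
    have t2 : - ⟪x k - x (k+1), s - x (k+1)⟫ ≤ ‖x k - x (k+1)‖ * d := by
      have h1 := neg_le_of_abs_le (abs_real_inner_le_norm (x k - x (k+1)) (s - x (k+1)))
      have h2 : ‖s - x (k+1)‖ ≤ d := by rw [norm_sub_rev]; exact hbd _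
      have h3 := mul_le_mul_of_nonneg_left h2 (norm_nonneg (x k - x (k+1)))
      linarith
    have t3 : δ * ‖x k - x (k+1)‖ ^ 2 ≤ ‖x k - x (k+1)‖ * d := by
      have h1 : δ * ‖x k - x (k+1)‖ ≤ d := by
        have := mul_le_mul hδ1.le s5 (norm_nonneg _) (by norm_num)
        linarith
      have h2 := mul_le_mul_of_nonneg_left h1 (norm_nonneg (x k - x (k+1)))
      calc _ = ‖x k - x (k+1)‖ * (δ * ‖x k - x (k+1)‖) := by ring
        _ ≤ _ := h2
    have t4 : a k * ε ≤ ‖x k - x (k+1)‖ * M := by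
      have h2 := mul_le_mul_of_nonneg_left (hc (k+1)) (ha k).le
      have h3 := norm_nonneg (x k - x (k+1))
      have h4 : ‖x k - x (k+1)‖ * M = 2 * (‖x k - x (k+1)‖ * d) + ‖x k - x (k+1)‖ := by
        rw [hM]; ring
      rw [h4]
      linarith
    have t5 : δ * ‖x k - x (k+1)‖ < β * (ε * θ * δ / M) := by
      rw [norm_sub_rev q (x k)] at hf1
      linarith [mul_lt_mul_of_pos_left hη hβ0, mul_le_mul_of_nonneg_left s1 hδ0.le]
    have t6 : δ * ‖x k - x (k+1)‖ * M < β * (ε * θ * δ) := by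
      have := mul_lt_mul_of_pos_right t5 hM0
      have e : β * (ε * θ * δ / M) * M = β * (ε * θ * δ) := by field_simp
      linarith
    rw [hab] at t4
    linarith [mul_le_mul_of_nonneg_left t4 hδ0.le]
  rw [Metric.tendsto_atTop]
  intro ε hε
  obtain ⟨k, hk⟩ := key ε hε
  refine ⟨k, fun j hj => ?_⟩
  rw [Real.dist_eq, abs_of_nonneg (sub_nonneg.2 (hmin _ (hxD j)))]
  have : fr (x j) + gr (x j) ≤ fr (x k) + gr (x k) := hmono hj
  linarith

/-- Opial-type lemma via ultrafilters. -/
lemma opial (x : ℕ → H) (S : Set H) (R : ℝ) (hR : ∀ k, ‖x k‖ ≤ R)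
    (hconv : ∀ s ∈ S, ∃ l, Tendsto (fun k => ‖x k - s‖ ^ 2) atTop (nhds l))
    (hclus : ∀ (U : Ultrafilter ℕ), (U : Filter ℕ) ≤ atTop → ∀ p : H,
      (∀ y : H, Tendsto (fun k => ⟪x k, y⟫) U (nhds ⟪p, y⟫)) → p ∈ S) :
    ∃ p ∈ S, ∀ y : H, Tendsto (fun k => ⟪x k, y⟫) atTop (nhds ⟪p, y⟫) := by
  have hex : ∀ U : Ultrafilter ℕ, ∃ p : H,
      ∀ y : H, Tendsto (fun k => ⟪x k, y⟫) U (nhds ⟪p, y⟫) := by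
    intro U
    have h1 : ∀ y : H, ∃ l : ℝ, |l| ≤ R * ‖y‖ ∧ Tendsto (fun k => ⟪x k, y⟫) U (nhds l) := by
      intro y
      have hc : IsCompact (Icc (-(R * ‖y‖)) (R * ‖y‖)) := isCompact_Icc
      obtain ⟨l, hl, hl2⟩ := hc.ultrafilter_le_nhds (U.map (fun k => ⟪x k, y⟫)) (by
        rw [le_principal_iff, Ultrafilter.coe_map, Filter.mem_map]
        refine Filter.mem_of_superset Filter.univ_mem (fun k _ => ?_)
        exact abs_le.1 ((abs_real_inner_le_norm _ _).trans
          (mul_le_mul_of_nonneg_right (hR k) (norm_nonneg y))))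
      exact ⟨l, abs_le.2 hl, hl2⟩
    choose φ hφ1 hφ2 using h1
    let L : H →ₗ[ℝ] ℝ :=
      { toFun := φ
        map_add' := fun y z => tendsto_nhds_unique (hφ2 (y + z)) (by
          simpa only [inner_add_right] using (hφ2 y).add (hφ2 z))
        map_smul' := fun c y => tendsto_nhds_unique (hφ2 (c • y)) (by
          simpa only [inner_smul_right, smul_eq_mul, RingHom.id_apply] using
            (hφ2 y).const_mul c) }
    let L' : H →L[ℝ] ℝ := L.mkContinuous R (fun y => hφ1 y)
    refine ⟨(InnerProductSpace.toDual ℝ H).symm L', fun y => ?_⟩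
    rw [InnerProductSpace.toDual_symm_apply]
    exact hφ2 y
  choose P hP using hex
  have huniq : ∀ U V : Ultrafilter ℕ, (U : Filter ℕ) ≤ atTop → (V : Filter ℕ) ≤ atTop →
      P U = P V := by
    intro U V hU hV
    obtain ⟨l, hl⟩ := hconv _ (hclus U hU _ (hP U))
    obtain ⟨m, hm⟩ := hconv _ (hclus V hV _ (hP V))
    have h1 : Tendsto (fun k => ⟪x k, P U - P V⟫) atTop
        (nhds ((m - l + ‖P U‖ ^ 2 - ‖P V‖ ^ 2) / 2)) := by
      have := (((hm.sub hl).add_const (‖P U‖ ^ 2)).sub_const (‖P V‖ ^ 2)).div_const 2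
      refine this.congr (fun k => ?_)
      rw [norm_sub_sq_real, norm_sub_sq_real, inner_sub_right]
      ring
    have h2 := tendsto_nhds_unique (hP U (P U - P V)) (h1.mono_left hU)
    have h3 := tendsto_nhds_unique (hP V (P U - P V)) (h1.mono_left hV)
    have h4 : ⟪P U - P V, P U - P V⟫ = 0 := by
      rw [inner_sub_left, h2, h3, sub_self]
    exact sub_eq_zero.1 (inner_self_eq_zero.1 h4)
  have hU0 : ((Ultrafilter.of atTop : Ultrafilter ℕ) : Filter ℕ) ≤ atTop := Ultrafilter.of_le _
  refine ⟨P (Ultrafilter.of atTop), hclus _ hU0 _ (hP _), fun y => ?_⟩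
  rw [tendsto_iff_ultrafilter]
  intro U hU
  rw [← huniq U _ hU hU0]
  exact hP U y

lemma weak_closed (C : Set H) (hC : Convex ℝ C) (hcl : IsClosed C) (x : ℕ → H)
    (U : Ultrafilter ℕ) (p : H) (hev : ∀ᶠ k in (U : Filter ℕ), x k ∈ C)
    (hp : ∀ y : H, Tendsto (fun k => ⟪x k, y⟫) U (nhds ⟪p, y⟫)) : p ∈ C := by
  by_contra hpC
  obtain ⟨φ, u, h1, h2⟩ := geometric_hahn_banach_closed_point hC hcl hpC
  have h3 := hp ((InnerProductSpace.toDual ℝ H).symm φ)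
  have h4 : ∀ z, ⟪z, (InnerProductSpace.toDual ℝ H).symm φ⟫ = φ z := fun z => by
    rw [real_inner_comm, InnerProductSpace.toDual_symm_apply]
  simp only [h4] at h3
  have h5 : φ p ≤ u := le_of_tendsto h3 (hev.mono fun k hk => (h1 _ hk).le)
  linarith

lemma grad_ineq (D : Set H) (fr : H → ℝ) (hc : ConvexOn ℝ D fr) (v x y : H)
    (hx : x ∈ D) (hy : y ∈ D) (hg : HasGradientAt fr v x) : fr x + ⟪v, y - x⟫ ≤ fr y := by
  have h1 : ConvexOn ℝ (AffineMap.lineMap x y ⁻¹' D : Set ℝ) (fr ∘ AffineMap.lineMap x y) :=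
    hc.comp_affineMap (AffineMap.lineMap x y : ℝ →ᵃ[ℝ] H)
  have h2 : HasDerivAt (fr ∘ (AffineMap.lineMap x y : ℝ →ᵃ[ℝ] H)) ⟪v, y - x⟫ 0 := by
    have h3 : HasDerivAt (AffineMap.lineMap x y : ℝ →ᵃ[ℝ] H) (y - x) (0 : ℝ) :=
      AffineMap.hasDerivAt_lineMap
    have h4 := hg.hasFDerivAt
    have h5 : HasFDerivAt fr (InnerProductSpace.toDual ℝ H v)
        ((AffineMap.lineMap x y : ℝ →ᵃ[ℝ] H) 0) := by
      simpa using h4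
    have := h5.comp_hasDerivAt (0 : ℝ) h3
    simpa using this
  have := h1.le_slope_of_hasDerivAt (x := 0) (y := 1) (by simpa using hx) (by simpa using hy)
    one_pos h2
  simp [slope_def_field] at this
  linarith

lemma prox_ineq (D : Set H) (gr : H → ℝ) (hc : ConvexOn ℝ D gr) (α : ℝ) (hα : 0 < α) (z p y : H)
    (hp : p ∈ D) (hy : y ∈ D)
    (hm : ∀ w ∈ D, gr p + 1 / (2 * α) * ‖p - z‖ ^ 2 ≤ gr w + 1 / (2 * α) * ‖w - z‖ ^ 2) :
    ⟪z - p, y - p⟫ ≤ α * (gr y - gr p) := by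
  have key : ∀ t : ℝ, 0 < t → t ≤ 1 →
      ⟪z - p, y - p⟫ - α * (gr y - gr p) ≤ t * (‖y - p‖ ^ 2 / 2) := by
    intro t ht ht1
    have h1 := hm _ (hc.1 hp hy (sub_nonneg.2 ht1) ht.le (by ring))
    have h2 := hc.2 hp hy (sub_nonneg.2 ht1) ht.le (by ring)
    have e : (1 - t) • p + t • y - z = t • (y - p) - (z - p) := by
      rw [sub_smul, one_smul, smul_sub]; abel
    rw [e, norm_sub_sq_real (t • (y - p)) (z - p), norm_smul, real_inner_smul_left, norm_sub_rev p z,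
      real_inner_comm (z - p) (y - p), Real.norm_of_nonneg ht.le, mul_pow] at h1
    simp only [smul_eq_mul] at h2
    have h3 : 0 ≤ t * (gr y - gr p) + 1 / (2 * α) *
        (t ^ 2 * ‖y - p‖ ^ 2 - 2 * (t * ⟪z - p, y - p⟫)) := by nlinarith
    have h4 : 0 ≤ t * (α * (gr y - gr p) + (t * (‖y - p‖ ^ 2 / 2) - ⟪z - p, y - p⟫)) := by
      have := mul_nonneg hα.le h3
      have e2 : α * (t * (gr y - gr p) + 1 / (2 * α) *
        (t ^ 2 * ‖y - p‖ ^ 2 - 2 * (t * ⟪z - p, y - p⟫))) =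
        t * (α * (gr y - gr p) + (t * (‖y - p‖ ^ 2 / 2) - ⟪z - p, y - p⟫)) := by
        field_simp
      rwa [e2] at this
    have h5 := nonneg_of_mul_nonneg_right h4 ht
    linarith
  have hl : Tendsto (fun t : ℝ => t * (‖y - p‖ ^ 2 / 2)) (𝓝[>] 0) (nhds 0) := by
    have : Tendsto (fun t : ℝ => t * (‖y - p‖ ^ 2 / 2)) (nhds 0) (nhds (0 * (‖y - p‖ ^ 2 / 2))) :=
      tendsto_id.mul_const _
    rw [zero_mul] at this
    exact this.mono_left nhdsWithin_le_nhds
  have := ge_of_tendsto hl (by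
    filter_upwards [Ioc_mem_nhdsGT (zero_lt_one' ℝ)] with t ht
    exact key t ht.1 ht.2)
  linarith

lemma convexOn_toReal (h : H → EReal) (hh : ProperLscConvex h) (D : Set H) (hD : Convex ℝ D)
    (hsub : D ⊆ edom h) : ConvexOn ℝ D (fun y => (h y).toReal) := by
  refine ⟨hD, fun x hx y hy s t hs ht hst => ?_⟩
  have h1 := hh.2.2.2 x y s t hs ht hst
  have ex := EReal.coe_toReal (hsub hx).ne (hh.2.1 x).ne'
  have ey := EReal.coe_toReal (hsub hy).ne (hh.2.1 y).ne'
  have ez := EReal.coe_toReal (hsub (hD hx hy hs ht hst)).ne (hh.2.1 _).ne'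
  rw [← ex, ← ey, ← ez] at h1
  exact_mod_cast h1

lemma convex_edom (h : H → EReal) (hh : ProperLscConvex h) : Convex ℝ (edom h) := by
  intro x hx y hy s t hs ht hst
  have h1 := hh.2.2.2 x y s t hs ht hst
  have ex := EReal.coe_toReal (ne_of_lt hx) (hh.2.1 x).ne'
  have ey := EReal.coe_toReal (ne_of_lt hy) (hh.2.1 y).ne'
  rw [← ex, ← ey] at h1
  refine lt_of_le_of_lt h1 ?_
  exact_mod_cast EReal.coe_lt_top (s * (h x).toReal + t * (h y).toReal)

/-- Theorem 4.1(i): under Assumptions A1–A2, if `S⁎ ≠ ∅` then the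
sequence generated by Method 1 (forward-backward with Linesearch 1) converges weakly
to a point of `S⁎`, and `(f+g)(xᵏ) → min (f+g)`. -/
theorem stmt6
    (f g : H → EReal) (f' : H → H) (prox : ℝ → H → H)
    (hf : ProperLscConvex f) (hg : ProperLscConvex g)
    (hdom : edom g ⊆ edom f)
    (hdiff : GradOnOpenSupset f f' (edom g))
    (hA2 : UCBddOnBounded g f')
    (hprox : ∀ α : ℝ, 0 < α → ∀ z : H, IsProxPt g α z (prox α z))
    (J : H → ℝ → H) (hJ : ∀ (x : H) (α : ℝ), J x α = prox α (x - α • f' x))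
    (σ θ δ : ℝ) (hσ : 0 < σ) (hθ : θ ∈ Set.Ioo (0 : ℝ) 1)
    (hδ : δ ∈ Set.Ioo (0 : ℝ) (1 / 2))
    (x : ℕ → H) (a : ℕ → ℝ)
    (hx0 : x 0 ∈ edom g)
    (hls : ∀ k : ℕ, LS1Step f' J δ σ θ (x k) (a k))
    (hiter : ∀ k : ℕ, x (k + 1) = J (x k) (a k))
    (hS : (argminSet f g).Nonempty) :
    ∃ p ∈ argminSet f g,
      (∀ y : H, Tendsto (fun k => ⟪x k, y⟫) atTop (nhds ⟪p, y⟫)) ∧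
        Tendsto (fun k => f (x k) + g (x k)) atTop (nhds (⨅ y, f y + g y)) := by
  have hDc : Convex ℝ (edom g) := convex_edom g hg
  have hfc := convexOn_toReal f hf (edom g) hDc hdom
  have hgc := convexOn_toReal g hg (edom g) hDc subset_rfl
  have ef : ∀ y ∈ edom g, ((f y).toReal : EReal) = f y := fun y hy =>
    EReal.coe_toReal (hdom hy).ne (hf.2.1 y).ne'
  have eg : ∀ y ∈ edom g, ((g y).toReal : EReal) = g y := fun y hy =>
    EReal.coe_toReal (ne_of_lt hy) (hg.2.1 y).ne'
  have eF : ∀ y ∈ edom g, (((f y).toReal + (g y).toReal : ℝ) : EReal) = f y + g y := by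
    intro y hy
    rw [EReal.coe_add, ef y hy, eg y hy]
  have hnD : ∀ y, y ∉ edom g → f y + g y = ⊤ := by
    intro y hy
    have : g y = ⊤ := by simpa [edom] using hy
    rw [this]
    exact EReal.add_top_of_ne_bot (hf.2.1 y).ne'
  have hSD : ∀ s ∈ argminSet f g, s ∈ edom g := by
    intro s hs
    by_contra hc
    have h1 := hs (x 0)
    rw [hnD s hc, ← eF _ hx0] at h1
    exact absurd h1 (not_le.2 (EReal.coe_lt_top _))
  have hSmin : ∀ s ∈ argminSet f g, ∀ y ∈ edom g,
      (f s).toReal + (g s).toReal ≤ (f y).toReal + (g y).toReal := by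
    intro s hs y hy
    have h1 := hs y
    rw [← eF _ hy, ← eF _ (hSD s hs)] at h1
    exact_mod_cast h1
  have hproxD : ∀ α : ℝ, 0 < α → ∀ z, prox α z ∈ edom g := by
    intro α hα z
    have h1 := hprox α hα z (x 0)
    by_contra hc
    have : g (prox α z) = ⊤ := by simpa [edom] using hc
    rw [this, ← eg _ hx0, EReal.top_add_coe, ← EReal.coe_add] at h1
    exact absurd h1 (not_le.2 (EReal.coe_lt_top _))
  obtain ⟨V, -, hV, hgrad⟩ := hdiff
  have hcore := core (edom g) (fun y => (f y).toReal) (fun y => (g y).toReal) f' J σ θ δ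
    (fun u hu v hv => grad_ineq (edom g) _ hfc (f' u) u v hu hv (hgrad u (hV hu)).2)
    (fun u _ α hα => by rw [hJ]; exact hproxD α hα _)
    (fun u hu α hα y hy => by
      have h1 := prox_ineq (edom g) _ hgc α hα (u - α • f' u) (J u α) y
        (by rw [hJ]; exact hproxD α hα _) hy (fun w hw => by
          have h2 := hprox α hα (u - α • f' u) w
          rw [← hJ] at h2
          rw [← eg w hw, ← eg (J u α) (by rw [hJ]; exact hproxD α hα _)] at h2
          exact_mod_cast h2)
      have e : ⟪u - α • f' u - J u α, y - J u α⟫ =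
          ⟪u - J u α, y - J u α⟫ - α * ⟪f' u, y - J u α⟫ := by
        rw [← real_inner_smul_left, ← inner_sub_left]; congr 1; abel
      rwa [e] at h1)
    (fun A hA hb => (hA2 A hA hb).1) hσ hθ hδ x a hx0 hls hiter
  obtain ⟨s, hs⟩ := hS
  obtain ⟨hxD, -, hbd, hlim⟩ := hcore s (hSD s hs) (hSmin s hs)
  have hsub : ∀ c : ℝ, Convex ℝ {y | f y + g y ≤ (c : EReal)} ∧
      IsClosed {y | f y + g y ≤ (c : EReal)} := by
    intro c
    constructor
    · have hD : ∀ y, f y + g y ≤ (c : EReal) → y ∈ edom g := by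
        intro y hy
        by_contra hc
        rw [hnD y hc] at hy
        exact absurd hy (not_le.2 (EReal.coe_lt_top _))
      have : {y | f y + g y ≤ (c : EReal)} =
          {y ∈ edom g | ((fun y => (f y).toReal) + fun y => (g y).toReal) y ≤ c} := by
        ext y
        constructor
        · intro hy
          have hy' : f y + g y ≤ (c : EReal) := hy
          refine ⟨hD y hy', ?_⟩
          rw [← eF y (hD y hy')] at hy'
          exact_mod_cast hy'
        · rintro ⟨hy, h2⟩
          show f y + g y ≤ (c : EReal)
          rw [← eF y hy]
          exact_mod_cast h2
      rw [this]
      exact (hfc.add hgc).convex_le c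
    · have hl : LowerSemicontinuous (fun y => f y + g y) :=
        hf.2.2.1.add' hg.2.2.1 (fun y => EReal.continuousAt_add
          (Or.inr (hg.2.1 y).ne') (Or.inl (hf.2.1 y).ne'))
      exact hl.isClosed_preimage (c : EReal)
  obtain ⟨p, hp, hw⟩ := opial x (argminSet f g) (‖x 0 - s‖ + ‖s‖)
    (fun k => by
      have h1 := norm_add_le (x k - s) s
      rw [sub_add_cancel] at h1
      linarith [hbd k])
    (fun t ht => (hcore t (hSD t ht) (hSmin t ht)).2.1)
    (fun U hU p hp => by
      have h1 : ∀ c : ℝ, (f s).toReal + (g s).toReal < c → f p + g p ≤ (c : EReal) := by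
        intro c hc
        refine weak_closed _ (hsub c).1 (hsub c).2 x U p ?_ hp
        refine Filter.Eventually.filter_mono hU ?_
        filter_upwards [hlim.eventually_lt_const hc] with k hk
        show f (x k) + g (x k) ≤ (c : EReal)
        rw [← eF _ (hxD k)]
        exact_mod_cast hk.le
      have h2 : f p + g p ≤ f s + g s := by
        rw [← eF s (hSD s hs)]
        refine EReal.le_of_forall_lt_iff_le.1 (fun c hc => h1 c ?_)
        exact_mod_cast hc
      exact fun y => h2.trans (hs y))
  refine ⟨p, hp, hw, ?_⟩
  have e : (⨅ y, f y + g y) = (((f s).toReal + (g s).toReal : ℝ) : EReal) := by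
    rw [eF s (hSD s hs)]
    exact le_antisymm (iInf_le _ s) (le_iInf hs)
  rw [e]
  refine (EReal.tendsto_coe.2 hlim).congr (fun k => ?_)
  exact eF _ (hxD k)
end
end

section
/- Let H be a real Hilbert space and let f, g : H → ℝ ∪ {+∞} satisfy Assumptions A1–A2 (f, g proper, lower semicontinuous, convex, dom g ⊆ dom f, f Fréchet differentiable on an open set containing dom g, ∇f uniformly continuous on bounded subsets of dom g and mapping bounded subsets of dom g to bounded sets). Let (x^k) be generated by the forward-backward method with Linesearch 1 (x⁰ ∈ dom g, σ > 0, θ ∈ (0,1), δ ∈ (0,1/2), α_k the largest α ∈ {σθⁿ : n ≥ 0} with α‖∇f(J(x^k,α)) − ∇f(x^k)‖ ≤ δ‖J(x^k,α) − x^k‖, x^{k+1} = J(x^k, α_k)). If f+g has no minimizer in H, then ‖x^k‖ → +∞ and (f+g)(x^k) → inf_{x∈H} (f+g)(x) as k → ∞. -/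
open Set Filter Topology Bornology RealInnerProductSpace

noncomputable section

variable {H : Type*} [NormedAddCommGroup H] [InnerProductSpace ℝ H] [CompleteSpace H]

lemma real_rep {h : H → EReal} (hh : ∀ x, ⊥ < h x) {x : H} (hx : h x < ⊤) :
    h x = (((h x).toReal : ℝ) : EReal) :=
  (EReal.coe_toReal hx.ne (hh x).ne').symm

lemma edom_comb {h : H → EReal} (hh : ProperLscConvex h) {x y : H}
    (hx : x ∈ edom h) (hy : y ∈ edom h) {a b : ℝ} (ha : 0 ≤ a) (hb : 0 ≤ b) (hab : a + b = 1) :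
    a • x + b • y ∈ edom h ∧
      (h (a • x + b • y)).toReal ≤ a * (h x).toReal + b * (h y).toReal := by
  have h1 := hh.2.2.2 x y a b ha hb hab
  rw [real_rep hh.2.1 hx, real_rep hh.2.1 hy] at h1
  rw [← EReal.coe_mul, ← EReal.coe_mul, ← EReal.coe_add] at h1
  have h2 : a • x + b • y ∈ edom h := lt_of_le_of_lt h1 (EReal.coe_lt_top _)
  refine ⟨h2, ?_⟩
  rw [real_rep hh.2.1 h2] at h1
  exact EReal.coe_le_coe_iff.1 h1

lemma grad_ineq_s7 {f : H → EReal} (hf : ProperLscConvex f) {x y v : H}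
    (hx : x ∈ edom f) (hy : y ∈ edom f)
    (hd : HasGradientAt (fun y => (f y).toReal) v x) :
    (f x).toReal + ⟪v, y - x⟫ ≤ (f y).toReal := by
  have hd' := hd.hasFDerivAt
  have hl : HasDerivAt (fun t : ℝ => x + t • (y - x)) (y - x) 0 := by
    simpa using ((hasDerivAt_id (0:ℝ)).smul_const (y - x)).const_add x
  have hc : HasDerivAt (fun t : ℝ => (f (x + t • (y - x))).toReal) ⟪v, y - x⟫ 0 := by
    have := HasFDerivAt.comp_hasDerivAt (f := fun t : ℝ => x + t • (y - x)) (0:ℝ)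
      (l := fun y => (f y).toReal) (l' := (InnerProductSpace.toDual ℝ H) v) (by simpa using hd') hl
    simpa [Function.comp_def] using this
  have ht := hc.tendsto_slope_zero_right
  have : ⟪v, y - x⟫ ≤ (f y).toReal - (f x).toReal := by
    refine le_of_tendsto ht ?_
    filter_upwards [Ioo_mem_nhdsGT (zero_lt_one' ℝ)] with t ht
    have h1 := (edom_comb hf hx hy (a := 1 - t) (b := t) (by linarith [ht.2]) ht.1.le (by ring)).2
    have h2 : (1 - t) • x + t • y = x + t • (y - x) := by module
    rw [h2] at h1
    simp only [zero_add, zero_smul, add_zero, smul_eq_mul]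
    rw [inv_mul_le_iff₀ ht.1]
    linarith
  linarith

lemma prox_mem {g : H → EReal} (hg : ProperLscConvex g) {α : ℝ} {z p : H}
    (hp : IsProxPt g α z p) : p ∈ edom g := by
  obtain ⟨y, hy⟩ := hg.1
  have h1 := hp y
  by_contra hn
  have h2 : g p = ⊤ := by
    simpa [edom] using hn
  rw [h2, EReal.top_add_coe, real_rep hg.2.1 hy, ← EReal.coe_add] at h1
  exact absurd h1 (not_le.2 (EReal.coe_lt_top _))

lemma prox_ineq_s7 {g : H → EReal} (hg : ProperLscConvex g) {α : ℝ} (hα : 0 < α) {z p y : H}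
    (hp : IsProxPt g α z p) (hy : y ∈ edom g) :
    ⟪z - p, y - p⟫ ≤ α * ((g y).toReal - (g p).toReal) := by
  have hpm := prox_mem hg hp
  have key : ∀ t ∈ Ioo (0:ℝ) 1, ⟪z - p, y - p⟫ - t * (‖y - p‖^2 / 2)
      ≤ α * ((g y).toReal - (g p).toReal) := by
    intro t ht
    obtain ⟨h0, h1⟩ := edom_comb hg hpm hy (a := 1 - t) (b := t) (by linarith [ht.2]) ht.1.le (by ring)
    have h2 := hp ((1 - t) • p + t • y)
    rw [real_rep hg.2.1 h0, real_rep hg.2.1 hpm, ← EReal.coe_add, ← EReal.coe_add,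
      EReal.coe_le_coe_iff] at h2
    have h3 : (1 - t) • p + t • y - z = t • (y - p) - (z - p) := by module
    have h4 : ‖p - z‖ = ‖z - p‖ := norm_sub_rev _ _
    rw [h3, h4, norm_sub_sq_real (t • (y - p)), norm_smul, real_inner_smul_left, Real.norm_of_nonneg ht.1.le,
      real_inner_comm] at h2
    have h5 : t * ((g p).toReal - (g y).toReal) ≤
        (1 / (2 * α)) * (t^2 * ‖y - p‖^2 - 2 * t * ⟪z - p, y - p⟫) := by
      rw [mul_pow] at h2
      linarith
    rw [one_div, inv_mul_eq_div, le_div_iff₀ (by positivity)] at h5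
    have : t * (⟪z - p, y - p⟫ - t * (‖y - p‖^2 / 2))
      ≤ t * (α * ((g y).toReal - (g p).toReal)) := by linarith
    exact le_of_mul_le_mul_left this ht.1
  have hlim : Tendsto (fun t : ℝ => ⟪z - p, y - p⟫ - t * (‖y - p‖^2 / 2)) (𝓝[>] 0)
      (𝓝 ⟪z - p, y - p⟫) := by
    have : Continuous (fun t : ℝ => ⟪z - p, y - p⟫ - t * (‖y - p‖^2 / 2)) := by fun_prop
    simpa using (this.tendsto 0).mono_left nhdsWithin_le_nhds
  refine le_of_tendsto hlim ?_
  filter_upwards [Ioo_mem_nhdsGT (zero_lt_one' ℝ)] with t ht using key t ht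

lemma prox_mono {g : H → EReal} (hg : ProperLscConvex g) {α β : ℝ} (hα : 0 < α) (hαβ : α ≤ β)
    {x u p q : H} (hp : IsProxPt g α (x - α • u) p) (hq : IsProxPt g β (x - β • u) q) :
    ‖p - x‖ ≤ ‖q - x‖ ∧ α * ‖q - x‖ ≤ β * ‖p - x‖ := by
  have hβ : 0 < β := hα.trans_le hαβ
  have h1 := prox_ineq_s7 hg hα hp (prox_mem hg hq)
  have h2 := prox_ineq_s7 hg hβ hq (prox_mem hg hp)
  rw [norm_sub_rev p x, norm_sub_rev q x]
  have e1 : x - α • u - p = (x - p) - α • u := by module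
  have e2 : x - β • u - q = (x - q) - β • u := by module
  have e3 : q - p = (x - p) - (x - q) := by module
  have e4 : p - q = (x - q) - (x - p) := by module
  rw [e1, e3] at h1
  rw [e2, e4] at h2
  generalize x - p = v at *
  generalize x - q = w at *
  simp only [inner_sub_left, inner_sub_right, real_inner_smul_left, real_inner_self_eq_norm_sq] at h1 h2
  rw [real_inner_comm v w] at h2
  have hc := real_inner_le_norm v w
  have h1' := mul_le_mul_of_nonneg_left h1 hβ.le
  have h2' := mul_le_mul_of_nonneg_left h2 hα.le
  have hcc := mul_le_mul_of_nonneg_left hc (add_pos hα hβ).le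
  have h3 : (β * ‖v‖ - α * ‖w‖) * (‖v‖ - ‖w‖) ≤ 0 := by
    linarith
  have hv := norm_nonneg v
  have hw := norm_nonneg w
  constructor
  · by_contra! hlt
    have : 0 < β * ‖v‖ - α * ‖w‖ := by nlinarith
    nlinarith
  · by_contra! hlt
    have : 0 ≤ ‖w‖ - ‖v‖ ∨ 0 < ‖v‖ - ‖w‖ := by
      rcases le_or_gt ‖v‖ ‖w‖ with h | h
      · left; linarith
      · right; linarith
    rcases this with h | h
    · have : ‖v‖ < ‖w‖ := by
        by_contra! h'
        nlinarith
      nlinarith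
    · nlinarith

/-- Basic one-step inequality of the method. -/
lemma step_ineq {f g : H → EReal} {f' : H → H} (hf : ProperLscConvex f) (hg : ProperLscConvex g)
    (hdom : edom g ⊆ edom f) (hdiff : GradOnOpenSupset f f' (edom g)) {α δ : ℝ} (hα : 0 < α)
    {x p y : H} (hx : x ∈ edom g) (hy : y ∈ edom g) (hp : IsProxPt g α (x - α • f' x) p)
    (hl : α * ‖f' p - f' x‖ ≤ δ * ‖p - x‖) :
    ‖p - y‖ ^ 2 ≤ ‖x - y‖ ^ 2 + 2 * α * (((f y).toReal + (g y).toReal)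
      - ((f p).toReal + (g p).toReal)) - (1 - 2 * δ) * ‖p - x‖ ^ 2 := by
  obtain ⟨U, -, hsU, hU⟩ := hdiff
  have hpm := prox_mem hg hp
  have h1 := prox_ineq_s7 hg hα hp hy
  have h2 := mul_le_mul_of_nonneg_left
    (grad_ineq_s7 hf (hdom hx) (hdom hy) (hU x (hsU hx)).2) hα.le
  have h3 := mul_le_mul_of_nonneg_left
    (grad_ineq_s7 hf (hdom hpm) (hdom hx) (hU p (hsU hpm)).2) hα.le
  have h4 := real_inner_le_norm (f' p - f' x) (p - x)
  have h5 : α * ⟪f' p - f' x, p - x⟫ ≤ δ * ‖p - x‖ ^ 2 := by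
    nlinarith [norm_nonneg (p - x), mul_le_mul_of_nonneg_right hl (norm_nonneg (p - x))]
  have e1 : y - x = (p - x) - (p - y) := by module
  have e2 : y - p = - (p - y) := by module
  have e3 : x - p = - (p - x) := by module
  have e4 : x - α • f' x - p = - (p - x) - α • f' x := by module
  have e5 : x - y = (p - y) - (p - x) := by module
  rw [e4, e2] at h1
  rw [e1] at h2
  rw [e3] at h3
  rw [e5, norm_sub_sq_real (p - y) (p - x)]
  generalize p - x = d at *
  generalize p - y = w at *
  simp only [inner_sub_left, inner_sub_right, inner_neg_left, inner_neg_right,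
    real_inner_smul_left] at h1 h2 h3 h5 ⊢
  linarith [real_inner_comm d w]

/-- Nested closed convex sets meeting a fixed ball have a common point. -/
lemma nested_inter (C : ℕ → Set H) (hanti : Antitone C) (hcl : ∀ n, IsClosed (C n))
    (hcv : ∀ n, Convex ℝ (C n)) (R : ℝ) (hR : ∀ n, ∃ z ∈ C n, ‖z‖ ≤ R) :
    ∃ z, ∀ n, z ∈ C n := by
  have hmin : ∀ n, ∃ v ∈ C n, ∀ w ∈ C n, ‖v‖ ^ 2 ≤ ⟪v, w⟫ := by
    intro n
    obtain ⟨z, hz, -⟩ := hR n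
    obtain ⟨v, hv, he⟩ := exists_norm_eq_iInf_of_complete_convex ⟨z, hz⟩ (hcl n).isComplete (hcv n) 0
    refine ⟨v, hv, fun w hw => ?_⟩
    have := (norm_eq_iInf_iff_real_inner_le_zero (hcv n) hv).1 he w hw
    simp only [zero_sub, inner_neg_left, inner_sub_right, real_inner_self_eq_norm_sq] at this
    linarith
  choose v hv hvm using hmin
  have hle : ∀ m n, m ≤ n → ‖v n - v m‖ ^ 2 ≤ ‖v n‖ ^ 2 - ‖v m‖ ^ 2 := by
    intro m n hmn
    have := hvm m (v n) (hanti hmn (hv n))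
    rw [norm_sub_sq_real, real_inner_comm]
    linarith
  have hmono : Monotone (fun n => ‖v n‖ ^ 2) := by
    intro m n hmn
    have := hle m n hmn
    have h0 : 0 ≤ ‖v n - v m‖ ^ 2 := by positivity
    show ‖v m‖ ^ 2 ≤ ‖v n‖ ^ 2
    linarith
  have hbdd : BddAbove (range (fun n => ‖v n‖ ^ 2)) := by
    refine ⟨R ^ 2, ?_⟩
    rintro _ ⟨n, rfl⟩
    obtain ⟨z, hz, hzR⟩ := hR n
    have h1 := hvm n z hz
    have h2 := real_inner_le_norm (v n) z
    have h3 : ‖v n‖ ≤ ‖z‖ := by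
      by_contra! h
      nlinarith [norm_nonneg z]
    have : ‖v n‖ ≤ R := h3.trans hzR
    show ‖v n‖ ^ 2 ≤ R ^ 2
    gcongr
  have hconv := tendsto_atTop_ciSup hmono hbdd
  have hcs : CauchySeq v := by
    have hc := hconv.cauchySeq
    rw [Metric.cauchySeq_iff'] at hc ⊢
    intro ε hε
    obtain ⟨N, hN⟩ := hc (ε ^ 2) (by positivity)
    refine ⟨N, fun n hn => ?_⟩
    have h1 := hN n hn
    rw [Real.dist_eq] at h1
    have h2 := hle N n hn
    have h3 := le_abs_self (‖v n‖ ^ 2 - ‖v N‖ ^ 2)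
    rw [dist_eq_norm]
    exact lt_of_pow_lt_pow_left₀ 2 hε.le (by linarith)
  obtain ⟨z, hz⟩ := cauchySeq_tendsto_of_complete hcs
  refine ⟨z, fun n => (hcl n).mem_of_tendsto hz ?_⟩
  filter_upwards [eventually_ge_atTop n] with m hm using hanti hm (hv m)

/-- Core: values along the iterates cannot stay above a level `L > (f+g)(y)`. -/
lemma core_s7
    {f g : H → EReal} {f' : H → H} {prox : ℝ → H → H}
    (hf : ProperLscConvex f) (hg : ProperLscConvex g)
    (hdom : edom g ⊆ edom f)
    (hdiff : GradOnOpenSupset f f' (edom g))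
    (hA2 : UCBddOnBounded g f')
    (hprox : ∀ α : ℝ, 0 < α → ∀ z : H, IsProxPt g α z (prox α z))
    {J : H → ℝ → H} (hJ : ∀ (x : H) (α : ℝ), J x α = prox α (x - α • f' x))
    {σ θ δ : ℝ} (hσ : 0 < σ) (hθ : θ ∈ Set.Ioo (0 : ℝ) 1)
    (hδ : δ ∈ Set.Ioo (0 : ℝ) (1 / 2))
    {x : ℕ → H} {a : ℕ → ℝ}
    (hxm : ∀ k, x k ∈ edom g)
    (hls : ∀ k : ℕ, LS1Step f' J δ σ θ (x k) (a k))
    (hstep : ∀ k, ∀ y ∈ edom g, ‖x (k+1) - y‖ ^ 2 ≤ ‖x k - y‖ ^ 2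
      + 2 * a k * (((f y).toReal + (g y).toReal)
      - ((f (x (k+1))).toReal + (g (x (k+1))).toReal)) - (1 - 2 * δ) * ‖x (k+1) - x k‖ ^ 2)
    (hiter : ∀ k : ℕ, x (k + 1) = J (x k) (a k))
    (y : H) (hy : y ∈ edom g) (ε : ℝ) (hε : 0 < ε)
    (hL : ∀ k, (f y).toReal + (g y).toReal + ε ≤ (f (x k)).toReal + (g (x k)).toReal) : False := by
  obtain ⟨hθ0, hθ1⟩ := hθ
  obtain ⟨hδ0, hδ1⟩ := hδ
  have hJp : ∀ z α, 0 < α → IsProxPt g α (z - α • f' z) (J z α) := fun z α h => by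
    rw [hJ]; exact hprox α h _
  have ha : ∀ k, 0 < a k := fun k => by
    obtain ⟨n, hn, -⟩ := hls k
    rw [hn]; positivity
  have hdec : ∀ k, 2 * a k * ε + (1 - 2 * δ) * ‖x (k+1) - x k‖ ^ 2 ≤
      ‖x k - y‖ ^ 2 - ‖x (k+1) - y‖ ^ 2 := by
    intro k
    have h1 := hstep k y hy
    have h2 := mul_le_mul_of_nonneg_left (hL (k+1)) (ha k).le
    linarith
  have hanti : Antitone (fun k => ‖x k - y‖ ^ 2) := by
    refine antitone_nat_of_succ_le fun k => ?_
    have h1 := hdec k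
    have h2 : 0 ≤ (1 - 2 * δ) * ‖x (k+1) - x k‖ ^ 2 := mul_nonneg (by linarith) (by positivity)
    have h3 := mul_pos (ha k) hε
    linarith
  set M := ‖x 0 - y‖ with hM
  have hM0 : 0 ≤ M := norm_nonneg _
  have hbd : ∀ k, ‖x k - y‖ ≤ M := fun k =>
    le_of_sq_le_sq (hanti (Nat.zero_le k)) hM0
  have hlim := tendsto_atTop_ciInf hanti ⟨0, by rintro _ ⟨k, rfl⟩; positivity⟩
  have hdiff0 : Tendsto (fun k => ‖x k - y‖ ^ 2 - ‖x (k+1) - y‖ ^ 2) atTop (𝓝 0) := by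
    simpa using hlim.sub (hlim.comp (tendsto_add_atTop_nat 1))
  have hd2 : ∀ k, ‖x (k+1) - x k‖ ≤ 2 * M := fun k => by
    have : x (k+1) - x k = (x (k+1) - y) - (x k - y) := by module
    rw [this]
    have := norm_sub_le (x (k+1) - y) (x k - y)
    linarith [hbd k, hbd (k+1)]
  set A := edom g ∩ Metric.closedBall y (M + 2 * M / θ) with hA
  obtain ⟨huc, -⟩ := hA2 A inter_subset_left (Metric.isBounded_closedBall.subset inter_subset_right)
  rw [Metric.uniformContinuousOn_iff] at huc
  set η := ε * θ * δ / (M + 1) with hη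
  have hη0 : 0 < η := by positivity
  obtain ⟨r, hr, huc⟩ := huc η hη0
  have hev1 : ∀ᶠ k in atTop, ‖x k - y‖ ^ 2 - ‖x (k+1) - y‖ ^ 2 < 2 * σ * ε :=
    hdiff0.eventually_lt_const (by positivity)
  have hev2 : ∀ᶠ k in atTop, ‖x k - y‖ ^ 2 - ‖x (k+1) - y‖ ^ 2 < (1 - 2 * δ) * (θ * r) ^ 2 :=
    hdiff0.eventually_lt_const (mul_pos (by linarith) (by positivity))
  obtain ⟨k, hk1, hk2⟩ := (hev1.and hev2).exists
  have hk := hdec k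
  have hak := ha k
  have hδ' : 0 < 1 - 2 * δ := by linarith
  have haσ : a k < σ := by
    have h2 : 0 ≤ (1 - 2 * δ) * ‖x (k+1) - x k‖ ^ 2 := by positivity
    have : ε * a k < ε * σ := by linarith
    exact lt_of_mul_lt_mul_left this hε.le
  have hdr : ‖x (k+1) - x k‖ < θ * r := by
    have h2 := mul_pos hak hε
    have h3 : (1 - 2 * δ) * ‖x (k+1) - x k‖ ^ 2 < (1 - 2 * δ) * (θ * r) ^ 2 := by linarith
    exact lt_of_pow_lt_pow_left₀ 2 (by positivity) (lt_of_mul_lt_mul_left h3 hδ'.le)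
  obtain ⟨n, hn, -, hfail⟩ := hls k
  have hn0 : n ≠ 0 := by
    rintro rfl
    simp at hn
    linarith
  obtain ⟨m, rfl⟩ := Nat.exists_eq_succ_of_ne_zero hn0
  have hfm := hfail m (Nat.lt_succ_self m)
  set β := σ * θ ^ m with hβ
  have hβ0 : 0 < β := by positivity
  have haβ : a k = θ * β := by rw [hn, hβ, pow_succ]; ring
  have haβ' : a k ≤ β := by rw [haβ]; nlinarith
  unfold LS1 at hfm
  push Not at hfm
  set p := J (x k) β with hp
  obtain ⟨hm1, hm2⟩ := prox_mono hg hak haβ' (hJp (x k) (a k) hak) (hJp (x k) β hβ0)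
  rw [← hiter, ← hp] at hm1 hm2
  have hm3 : θ * ‖p - x k‖ ≤ ‖x (k+1) - x k‖ := by
    rw [haβ] at hm2
    exact le_of_mul_le_mul_left (by linarith) hβ0
  have hpr : ‖p - x k‖ < r := lt_of_mul_lt_mul_left (hm3.trans_lt hdr) hθ0.le
  have hpA : p ∈ A := by
    refine ⟨prox_mem hg (hJp (x k) β hβ0), ?_⟩
    rw [Metric.mem_closedBall, dist_eq_norm]
    have h1 : ‖p - x k‖ ≤ 2 * M / θ := by
      rw [le_div_iff₀ hθ0]; linarith [hd2 k]
    have h2 : p - y = (x k - y) + (p - x k) := by module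
    rw [h2]
    exact (norm_add_le _ _).trans (add_le_add (hbd k) h1)
  have hxA : x k ∈ A := by
    refine ⟨hxm k, ?_⟩
    rw [Metric.mem_closedBall, dist_eq_norm]
    have : 0 ≤ 2 * M / θ := by positivity
    linarith [hbd k]
  have hcl := huc p hpA (x k) hxA (by rwa [dist_eq_norm])
  rw [dist_eq_norm] at hcl
  -- `δ d ≤ δ ‖p - x‖ < β η`
  have h1 : δ * ‖x (k+1) - x k‖ ≤ β * η := by
    have := mul_le_mul_of_nonneg_left hm1 hδ0.le
    have := mul_le_mul_of_nonneg_left hcl.le hβ0.le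
    linarith
  have h2 : a k * ε ≤ M * ‖x (k+1) - x k‖ := by
    have h3 : ‖x k - y‖ - ‖x (k+1) - y‖ ≤ ‖x (k+1) - x k‖ := by
      have := norm_sub_norm_le (x k - y) (x (k+1) - y)
      have e : x k - y - (x (k+1) - y) = x k - x (k+1) := by module
      rw [e, norm_sub_rev (x k) (x (k+1))] at this
      exact this
    have h4 : 0 ≤ (1 - 2 * δ) * ‖x (k+1) - x k‖ ^ 2 := by positivity
    have h5 : ‖x k - y‖ ^ 2 - ‖x (k+1) - y‖ ^ 2 ≤ ‖x (k+1) - x k‖ * (2 * M) := by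
      have e : ‖x k - y‖ ^ 2 - ‖x (k+1) - y‖ ^ 2 =
        (‖x k - y‖ - ‖x (k+1) - y‖) * (‖x k - y‖ + ‖x (k+1) - y‖) := by ring
      rw [e]
      exact mul_le_mul h3 (by linarith [hbd k, hbd (k+1)]) (by positivity) (norm_nonneg _)
    linarith
  have h3 : β * (θ * δ * ε) ≤ β * (M * η) := by
    have := mul_le_mul_of_nonneg_left h1 hM0
    have := mul_le_mul_of_nonneg_left h2 hδ0.le
    rw [haβ] at this
    linarith
  have h4 := le_of_mul_le_mul_left h3 hβ0
  have h5 : η * (M + 1) = ε * θ * δ := by rw [hη]; field_simp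
  linarith

/-- Theorem 4.1(ii): under Assumptions A1–A2, if `f+g` has no minimizer
then the Method-1 iterates satisfy `‖xᵏ‖ → ∞` and `(f+g)(xᵏ) → inf (f+g)`. -/
theorem stmt7
    (f g : H → EReal) (f' : H → H) (prox : ℝ → H → H)
    (hf : ProperLscConvex f) (hg : ProperLscConvex g)
    (hdom : edom g ⊆ edom f)
    (hdiff : GradOnOpenSupset f f' (edom g))
    (hA2 : UCBddOnBounded g f')
    (hprox : ∀ α : ℝ, 0 < α → ∀ z : H, IsProxPt g α z (prox α z))
    (J : H → ℝ → H) (hJ : ∀ (x : H) (α : ℝ), J x α = prox α (x - α • f' x))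
    (σ θ δ : ℝ) (hσ : 0 < σ) (hθ : θ ∈ Set.Ioo (0 : ℝ) 1)
    (hδ : δ ∈ Set.Ioo (0 : ℝ) (1 / 2))
    (x : ℕ → H) (a : ℕ → ℝ)
    (hx0 : x 0 ∈ edom g)
    (hls : ∀ k : ℕ, LS1Step f' J δ σ θ (x k) (a k))
    (hiter : ∀ k : ℕ, x (k + 1) = J (x k) (a k))
    (hS : argminSet f g = ∅) :
    Tendsto (fun k => ‖x k‖) atTop atTop ∧
      Tendsto (fun k => f (x k) + g (x k)) atTop (nhds (⨅ y, f y + g y)) := by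
  have hθ' := hθ
  have hδ' := hδ
  have ha : ∀ k, 0 < a k := fun k => by
    obtain ⟨n, hn, -⟩ := hls k
    rw [hn]; exact mul_pos hσ (pow_pos hθ.1 n)
  have hxp : ∀ k, IsProxPt g (a k) (x k - a k • f' (x k)) (x (k+1)) := fun k => by
    rw [hiter, hJ]; exact hprox _ (ha k) _
  have hxm : ∀ k, x k ∈ edom g := fun k => by
    cases k with
    | zero => exact hx0
    | succ k => exact prox_mem hg (hxp k)
  have hstep : ∀ k, ∀ y ∈ edom g, ‖x (k+1) - y‖ ^ 2 ≤ ‖x k - y‖ ^ 2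
      + 2 * a k * (((f y).toReal + (g y).toReal)
      - ((f (x (k+1))).toReal + (g (x (k+1))).toReal)) - (1 - 2 * δ) * ‖x (k+1) - x k‖ ^ 2 := by
    intro k y hy
    refine step_ineq hf hg hdom hdiff (ha k) (hxm k) hy (hxp k) ?_
    obtain ⟨n, -, h, -⟩ := hls k
    unfold LS1 at h
    rwa [← hiter] at h
  have hF : ∀ y ∈ edom g, f y + g y = (((f y).toReal + (g y).toReal : ℝ) : EReal) := by
    intro y hy
    rw [EReal.coe_add, ← real_rep hf.2.1 (hdom hy), ← real_rep hg.2.1 hy]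
  have hFtop : ∀ y, y ∉ edom g → f y + g y = ⊤ := by
    intro y hy
    have h2 : g y = ⊤ := by simpa [edom] using hy
    rw [h2, EReal.add_top_of_ne_bot (hf.2.1 y).ne']
  have hanti : Antitone (fun k => f (x k) + g (x k)) := by
    refine antitone_nat_of_succ_le fun k => ?_
    rw [hF _ (hxm k), hF _ (hxm (k+1)), EReal.coe_le_coe_iff]
    have h1 := hstep k (x k) (hxm k)
    rw [sub_self, norm_zero] at h1
    have h2 : 0 ≤ (1 - 2 * δ) * ‖x (k+1) - x k‖ ^ 2 :=
      mul_nonneg (by linarith [hδ.2]) (by positivity)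
    have h3 : 0 ≤ ‖x (k+1) - x k‖ ^ 2 := by positivity
    have h4 : 0 ≤ a k * (((f (x k)).toReal + (g (x k)).toReal)
      - ((f (x (k+1))).toReal + (g (x (k+1))).toReal)) := by linarith
    have := nonneg_of_mul_nonneg_right h4 (ha k)
    linarith
  have hinf : (⨅ k, f (x k) + g (x k)) = ⨅ y, f y + g y := by
    apply le_antisymm
    · refine le_iInf fun y => ?_
      by_contra! hlt
      obtain ⟨L, hL1, hL2⟩ := EReal.lt_iff_exists_real_btwn.1 hlt
      have hy : y ∈ edom g := by
        by_contra hn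
        rw [hFtop y hn] at hlt
        exact not_top_lt hlt
      rw [hF y hy, EReal.coe_lt_coe_iff] at hL1
      refine core_s7 hf hg hdom hdiff hA2 hprox hJ hσ hθ hδ hxm hls hstep hiter y hy
        (L - ((f y).toReal + (g y).toReal)) (by linarith) fun k => ?_
      have h1 := hL2.le.trans (iInf_le _ k)
      rw [hF _ (hxm k), EReal.coe_le_coe_iff] at h1
      linarith
    · exact le_iInf fun k => iInf_le _ (x k)
  refine ⟨?_, hinf ▸ tendsto_atTop_iInf hanti⟩
  by_contra hnot
  rw [tendsto_atTop] at hnot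
  push Not at hnot
  obtain ⟨R, hR⟩ := hnot
  have hlsc : LowerSemicontinuous (fun y => f y + g y) :=
    LowerSemicontinuous.add' hf.2.2.1 hg.2.2.1 fun y =>
      EReal.continuousAt_add (Or.inr (hg.2.1 y).ne') (Or.inl (hf.2.1 y).ne')
  obtain ⟨z, hz⟩ := nested_inter (fun k => {y | f y + g y ≤ f (x k) + g (x k)})
    (fun m n hmn y hy => le_trans hy (hanti hmn))
    (fun k => hlsc.isClosed_preimage _)
    (by
      intro k u hu v hv s t hs ht hst
      have hmem : ∀ u, f u + g u ≤ f (x k) + g (x k) → u ∈ edom g := by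
        intro u hu
        by_contra hn
        rw [hFtop u hn, hF _ (hxm k)] at hu
        exact absurd hu (not_le.2 (EReal.coe_lt_top _))
      simp only [mem_ofPred_eq] at hu hv ⊢
      have hum := hmem u hu
      have hvm := hmem v hv
      obtain ⟨h1, h2⟩ := edom_comb hg hum hvm hs ht hst
      obtain ⟨-, h3⟩ := edom_comb hf (hdom hum) (hdom hvm) hs ht hst
      rw [hF _ hum, hF _ (hxm k), EReal.coe_le_coe_iff] at hu
      rw [hF _ hvm, hF _ (hxm k), EReal.coe_le_coe_iff] at hv
      rw [hF _ h1, hF _ (hxm k), EReal.coe_le_coe_iff]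
      have h4 := mul_le_mul_of_nonneg_left hu hs
      have h5 := mul_le_mul_of_nonneg_left hv ht
      have h6 : s = 1 - t := by linarith
      subst h6
      linarith)
    R (by
      intro k
      obtain ⟨n, hn, hnR⟩ := frequently_atTop.1 hR k
      exact ⟨x n, hanti hn, hnR.le⟩)
  have : z ∈ argminSet f g := by
    intro y
    have h1 : f z + g z ≤ ⨅ k, f (x k) + g (x k) := le_iInf hz
    rw [hinf] at h1
    exact h1.trans (iInf_le _ y)
  rw [hS] at this
  exact this
end
end

section
/- Let H be a real Hilbert space and let f, g : H → ℝ ∪ {+∞} satisfy Assumptions A1–A2 (f, g proper, lower semicontinuous, convex, dom g ⊆ dom f, f Fréchet differentiable on an open set containing dom g, ∇f uniformly continuous on bounded subsets of dom g and mapping bounded subsets of dom g to bounded sets). Let (x^k) be generated by the forward-backward method with Linesearch 2: x⁰ ∈ dom g, θ ∈ (0,1); J_k = prox_g(x^k − ∇f(x^k)); β_k is the largest β ∈ {1, θ, θ², …} with (f+g)(x^k − β(x^k − J_k)) ≤ (f+g)(x^k) − β[g(x^k) − g(J_k)] − β⟨∇f(x^k), x^k − J_k⟩ + (β/2)‖x^k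 − J_k‖²; and x^{k+1} = x^k − β_k(x^k − J_k). If the set S* of minimizers of f+g is nonempty, then (x^k) is quasi-Fejér convergent to S* and converges weakly to a point of S*. -/
open Set Filter Topology Bornology RealInnerProductSpace

noncomputable section

variable {H : Type*} [NormedAddCommGroup H] [InnerProductSpace ℝ H] [CompleteSpace H]

section core
variable {E : Type*} [NormedAddCommGroup E] [InnerProductSpace ℝ E]

lemma core_grad_ineq {D : Set E} {F : E → ℝ} {f' : E → E} (hF : ConvexOn ℝ D F)
    (hgr : ∀ x ∈ D, HasFDerivAt F (innerSL ℝ (f' x)) x) {x y : E} (hx : x ∈ D) (hy : y ∈ D) :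
    F x + ⟪f' x, y - x⟫ ≤ F y := by
  have h1 : HasDerivAt (fun t : ℝ => F (x + t • (y - x))) ⟪f' x, y - x⟫ 0 := by
    have hl : HasDerivAt (fun t : ℝ => x + t • (y - x)) (y - x) 0 := by
      simpa using ((hasDerivAt_id (0:ℝ)).smul_const (y - x)).const_add x
    have h0 : HasFDerivAt F (innerSL ℝ (f' x)) (x + (0:ℝ) • (y - x)) := by
      simpa using hgr x hx
    exact h0.comp_hasDerivAt (0:ℝ) hl
  have h2 := h1.tendsto_slope_zero_right
  have h3 : ⟪f' x, y - x⟫ ≤ F y - F x := by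
    refine le_of_tendsto h2 ?_
    have hI : Ioo (0:ℝ) 1 ∈ 𝓝[>] (0:ℝ) := Ioo_mem_nhdsGT one_pos
    filter_upwards [hI] with t ht
    have hc := hF.2 hx hy (by linarith [ht.2] : (0:ℝ) ≤ 1 - t) ht.1.le (by ring)
    have he : (1 - t) • x + t • y = x + t • (y - x) := by module
    rw [he] at hc
    simp only [smul_eq_mul, zero_add, zero_smul, add_zero] at hc ⊢
    rw [inv_mul_le_iff₀ ht.1]
    nlinarith
  linarith

lemma core_prox {D : Set E} {G : E → ℝ} (hG : ConvexOn ℝ D G) {w J y : E} (hJ : J ∈ D)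
    (hp : ∀ y ∈ D, G J + 1 / 2 * ‖J - w‖ ^ 2 ≤ G y + 1 / 2 * ‖y - w‖ ^ 2) (hy : y ∈ D) :
    G J + ⟪w - J, y - J⟫ ≤ G y := by
  have key : ∀ t ∈ Ioo (0:ℝ) 1, G J - G y + ⟪w - J, y - J⟫ ≤ t * (1 / 2 * ‖y - J‖ ^ 2) := by
    intro t ht
    have hc := hG.2 hJ hy (by linarith [ht.2] : (0:ℝ) ≤ 1 - t) ht.1.le (by ring)
    have hm := hG.1 hJ hy (by linarith [ht.2] : (0:ℝ) ≤ 1 - t) ht.1.le (by ring)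
    have h1 := hp _ hm
    have he : (1 - t) • J + t • y - w = (J - w) + t • (y - J) := by module
    rw [he, norm_add_sq_real, inner_smul_right, norm_smul, mul_pow, Real.norm_eq_abs, sq_abs] at h1
    have h2 : ⟪J - w, y - J⟫ = - ⟪w - J, y - J⟫ := by rw [← inner_neg_left, neg_sub]
    rw [h2] at h1
    simp only [smul_eq_mul] at hc
    have h3 : t * (G J - G y + ⟪w - J, y - J⟫) ≤ t * (t * (1 / 2 * ‖y - J‖ ^ 2)) := by nlinarith
    exact le_of_mul_le_mul_left h3 ht.1
  have hI : Ioo (0:ℝ) 1 ∈ 𝓝[>] (0:ℝ) := Ioo_mem_nhdsGT one_pos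
  have ht : Tendsto (fun t : ℝ => t * (1 / 2 * ‖y - J‖ ^ 2)) (𝓝[>] 0) (𝓝 (0 * (1 / 2 * ‖y - J‖ ^ 2))) :=
    ((continuous_id.mul continuous_const).tendsto 0).mono_left nhdsWithin_le_nhds
  have := ge_of_tendsto ht (by filter_upwards [hI] with t ht using key t ht)
  linarith

/-- weak limit along an ultrafilter -/
lemma core_weak [CompleteSpace E] {x : ℕ → E} {R : ℝ} (hR : ∀ k, ‖x k‖ ≤ R) (U : Ultrafilter ℕ) :
    ∃ p : E, ∀ y, Tendsto (fun k => ⟪x k, y⟫) U (𝓝 ⟪p, y⟫) := by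
  have h1 : ∀ y : E, ∃ l, Tendsto (fun k => ⟪x k, y⟫) U (𝓝 l) ∧ ‖l‖ ≤ R * ‖y‖ := by
    intro y
    have hb : ∀ k, ⟪x k, y⟫ ∈ Metric.closedBall (0:ℝ) (R * ‖y‖) := by
      intro k
      rw [mem_closedBall_zero_iff]
      exact (norm_inner_le_norm _ _).trans (mul_le_mul_of_nonneg_right (hR k) (norm_nonneg _))
    obtain ⟨l, hl, hl2⟩ := (isCompact_closedBall (0:ℝ) (R * ‖y‖)).ultrafilter_le_nhds
      (U.map (fun k => ⟪x k, y⟫)) (by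
        rw [le_principal_iff]
        exact Filter.mem_map.2 (Filter.univ_mem' hb))
    exact ⟨l, hl2, mem_closedBall_zero_iff.1 hl⟩
  choose L hL hLb using h1
  let T : E →ₗ[ℝ] ℝ :=
    { toFun := L
      map_add' := by
        intro a b
        refine tendsto_nhds_unique (hL (a + b)) ?_
        simpa only [inner_add_right] using (hL a).add (hL b)
      map_smul' := by
        intro c a
        refine tendsto_nhds_unique (hL (c • a)) ?_
        simpa only [inner_smul_right, RingHom.id_apply, smul_eq_mul] using (hL a).const_mul c }
  let T' : StrongDual ℝ E := T.mkContinuous R hLb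
  refine ⟨(InnerProductSpace.toDual ℝ E).symm T', fun y => ?_⟩
  rw [InnerProductSpace.toDual_symm_apply]
  exact hL y

lemma core_closed_weak [CompleteSpace E] {C : Set E} (hC : Convex ℝ C) (hcl : IsClosed C)
    {l : Filter ℕ} [l.NeBot] {u : ℕ → E} {p : E}
    (hu : ∀ y, Tendsto (fun k => ⟪u k, y⟫) l (𝓝 ⟪p, y⟫)) (hm : ∀ᶠ k in l, u k ∈ C) : p ∈ C := by
  by_contra hp
  obtain ⟨T, c, h1, h2⟩ := geometric_hahn_banach_point_closed hC hcl hp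
  have hT : ∀ v, T v = ⟪v, (InnerProductSpace.toDual ℝ E).symm T⟫ := by
    intro v
    rw [real_inner_comm, InnerProductSpace.toDual_symm_apply]
  have h3 := hu ((InnerProductSpace.toDual ℝ E).symm T)
  simp only [← hT] at h3
  have := ge_of_tendsto h3 (hm.mono fun k hk => (h2 _ hk).le)
  linarith

def coreLS (F G : E → ℝ) (f' : E → E) (x J : E) (β : ℝ) : Prop :=
  F (x - β • (x - J)) + G (x - β • (x - J)) ≤
    F x + G x - β * (G x - G J) - β * ⟪f' x, x - J⟫ + (β / 2) * ‖x - J‖ ^ 2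

theorem core_main [CompleteSpace E] {D : Set E} {F G : E → ℝ} {f' : E → E}
    (hF : ConvexOn ℝ D F) (hG : ConvexOn ℝ D G)
    (hcl : ∀ c : ℝ, IsClosed {x | x ∈ D ∧ F x + G x ≤ c})
    (hgr : ∀ x ∈ D, HasFDerivAt F (innerSL ℝ (f' x)) x)
    (hA : ∀ A : Set E, A ⊆ D → IsBounded A → UniformContinuousOn f' A ∧ IsBounded (f' '' A))
    {θ : ℝ} (hθ : 0 < θ) {x J : ℕ → E} {b : ℕ → ℝ}
    (hx : ∀ k, x k ∈ D) (hJ : ∀ k, J k ∈ D)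
    (hp : ∀ k, ∀ y ∈ D, G (J k) + 1 / 2 * ‖J k - (x k - f' (x k))‖ ^ 2
      ≤ G y + 1 / 2 * ‖y - (x k - f' (x k))‖ ^ 2)
    (hb0 : ∀ k, 0 < b k) (hb1 : ∀ k, b k ≤ 1)
    (hls : ∀ k, coreLS F G f' (x k) (J k) (b k))
    (hnls : ∀ k, b k < 1 → b k / θ ≤ 1 ∧ ¬ coreLS F G f' (x k) (J k) (b k / θ))
    (hiter : ∀ k : ℕ, x (k + 1) = x k - b k • (x k - J k))
    {S : Set E} (hSdef : ∀ z, z ∈ S ↔ z ∈ D ∧ ∀ y ∈ D, F z + G z ≤ F y + G y)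
    (hS : S.Nonempty) :
    (∀ z ∈ S, ∃ ε : ℕ → ℝ, (∀ k, 0 ≤ ε k) ∧ Summable ε ∧
        ∀ k : ℕ, ‖x (k + 1) - z‖ ^ 2 ≤ ‖x k - z‖ ^ 2 + ε k) ∧
      ∃ p ∈ S, ∀ y : E, Tendsto (fun k => ⟪x k, y⟫) atTop (nhds ⟪p, y⟫) := by
  have hprox : ∀ k, ∀ y ∈ D, G (J k) + ⟪x k - f' (x k) - J k, y - J k⟫ ≤ G y :=
    fun k y hy => core_prox hG (hJ k) (hp k) hy
  have hgi : ∀ x ∈ D, ∀ y ∈ D, F x + ⟪f' x, y - x⟫ ≤ F y :=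
    fun x hx y hy => core_grad_ineq hF hgr hx hy
  -- decrease
  have hdec : ∀ k, F (x (k+1)) + G (x (k+1)) ≤ F (x k) + G (x k) := by
    intro k
    have h1 := hls k
    have h2 := hprox k (x k) (hx k)
    unfold coreLS at h1
    rw [← hiter] at h1
    have h3 : ⟪x k - f' (x k) - J k, x k - J k⟫ = ‖x k - J k‖ ^ 2 - ⟪f' (x k), x k - J k⟫ := by
      rw [show x k - f' (x k) - J k = (x k - J k) - f' (x k) by abel, inner_sub_left,
        real_inner_self_eq_norm_sq]
    rw [h3] at h2
    have := mul_le_mul_of_nonneg_left h2 (hb0 k).le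
    have h4 : 0 ≤ b k * ‖x k - J k‖ ^ 2 := mul_nonneg (hb0 k).le (sq_nonneg _)
    nlinarith
  have hfej : ∀ z ∈ D, ∀ k, ‖x (k+1) - z‖ ^ 2 + 2 * (F (x (k+1)) + G (x (k+1)))
      + 2 * (b k * (F (x k) + G (x k) - (F z + G z))) ≤
      ‖x k - z‖ ^ 2 + 2 * (F (x k) + G (x k)) := by
    intro z hz k
    have h1 := hls k
    unfold coreLS at h1
    rw [← hiter] at h1
    have h2 := hprox k z hz
    have h3 := hgi (x k) (hx k) z hz
    have e1 : ‖x (k+1) - z‖ ^ 2 = ‖x k - z‖ ^ 2 - 2 * (b k * ⟪x k - J k, x k - z⟫)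
        + b k ^ 2 * ‖x k - J k‖ ^ 2 := by
      rw [hiter, show x k - b k • (x k - J k) - z = (x k - z) - b k • (x k - J k) by abel,
        norm_sub_sq_real, inner_smul_right, norm_smul, mul_pow, Real.norm_eq_abs, sq_abs,
        real_inner_comm]
    have e2 : ⟪x k - f' (x k) - J k, z - J k⟫ = ‖x k - J k‖ ^ 2 - ⟪x k - J k, x k - z⟫
        - ⟪f' (x k), x k - J k⟫ - ⟪f' (x k), z - x k⟫ := by
      rw [← real_inner_self_eq_norm_sq]
      simp only [inner_sub_left, inner_sub_right]
      ring
    rw [e2] at h2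
    have h4 := mul_le_mul_of_nonneg_left (add_le_add h2 h3) (hb0 k).le
    have h5 : b k ^ 2 * ‖x k - J k‖ ^ 2 ≤ b k * ‖x k - J k‖ ^ 2 := by
      apply mul_le_mul_of_nonneg_right _ (sq_nonneg _)
      nlinarith [hb0 k, hb1 k]
    rw [e1]
    nlinarith
  obtain ⟨z0, hz0⟩ := hS
  have hz0' := (hSdef z0).1 hz0
  set m := F z0 + G z0 with hm
  have hlow : ∀ y ∈ D, m ≤ F y + G y := hz0'.2
  have hSm : ∀ z ∈ S, F z + G z = m := fun z hz =>
    le_antisymm (((hSdef z).1 hz).2 _ hz0'.1) (hlow _ ((hSdef z).1 hz).1)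
  have hfej2 : ∀ z ∈ S, ∀ k, ‖x (k+1) - z‖ ^ 2 + 2 * (F (x (k+1)) + G (x (k+1))) ≤
      ‖x k - z‖ ^ 2 + 2 * (F (x k) + G (x k)) := by
    intro z hz k
    have h1 := hfej z ((hSdef z).1 hz).1 k
    rw [hSm z hz] at h1
    have := mul_nonneg (hb0 k).le (sub_nonneg.2 (hlow _ (hx k)))
    linarith
  have hphi : Antitone fun k => F (x k) + G (x k) := antitone_nat_of_succ_le hdec
  obtain ⟨ℓ, hℓ⟩ : ∃ ℓ, Tendsto (fun k => F (x k) + G (x k)) atTop (𝓝 ℓ) :=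
    ⟨_, tendsto_atTop_ciInf hphi ⟨m, by rintro _ ⟨k, rfl⟩; exact hlow _ (hx k)⟩⟩
  have haa : ∀ z ∈ S, Antitone fun k => ‖x k - z‖ ^ 2 + 2 * (F (x k) + G (x k)) :=
    fun z hz => antitone_nat_of_succ_le (hfej2 z hz)
  have hacv : ∀ z ∈ S, ∃ a, Tendsto (fun k => ‖x k - z‖ ^ 2 + 2 * (F (x k) + G (x k)))
      atTop (𝓝 a) := fun z hz =>
    ⟨_, tendsto_atTop_ciInf (haa z hz) ⟨2 * m, by
      rintro _ ⟨k, rfl⟩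
      have := hlow _ (hx k)
      have := sq_nonneg ‖x k - z‖
      show 2 * m ≤ ‖x k - z‖ ^ 2 + 2 * (F (x k) + G (x k))
      linarith⟩⟩
  have hncv : ∀ z ∈ S, ∃ a, Tendsto (fun k => ‖x k - z‖ ^ 2) atTop (𝓝 a) := by
    intro z hz
    obtain ⟨a, ha⟩ := hacv z hz
    refine ⟨a - 2 * ℓ, ?_⟩
    refine (ha.sub (hℓ.const_mul 2)).congr fun k => ?_
    ring
  -- boundedness
  obtain ⟨R, hR⟩ : ∃ R, ∀ k, ‖x k‖ ≤ R := by
    obtain ⟨a, ha⟩ := hncv z0 hz0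
    obtain ⟨B, hB⟩ := ha.bddAbove_range
    refine ⟨(B + 1) + ‖z0‖, fun k => ?_⟩
    have h1 : ‖x k - z0‖ ^ 2 ≤ B := hB ⟨k, rfl⟩
    have h2 : ‖x k‖ ≤ ‖x k - z0‖ + ‖z0‖ := by simpa using norm_add_le (x k - z0) z0
    nlinarith [sq_nonneg (‖x k - z0‖ - 1)]
  obtain ⟨R', hR'⟩ : ∃ R', ∀ k, ‖f' (x k)‖ ≤ R' := by
    have hbx : IsBounded (range x) :=
      isBounded_iff_forall_norm_le.2 ⟨R, by rintro _ ⟨k, rfl⟩; exact hR k⟩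
    obtain ⟨B, hB⟩ := isBounded_iff_forall_norm_le.1
      (hA (range x) (by rintro _ ⟨k, rfl⟩; exact hx k) hbx).2
    exact ⟨B, fun k => hB _ ⟨x k, ⟨k, rfl⟩, rfl⟩⟩
  obtain ⟨Q, hQ⟩ : ∃ Q, ∀ k, ‖J k‖ ≤ Q := by
    refine ⟨(R + R') + ‖x 0 - f' (x 0)‖ + ‖J 0‖, fun k => ?_⟩
    have h1 := hprox k (J 0) (hJ 0)
    have h2 := hprox 0 (J k) (hJ k)
    have e : ⟪x k - f' (x k) - J k, J 0 - J k⟫ + ⟪x 0 - f' (x 0) - J 0, J k - J 0⟫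
        = ‖J k - J 0‖ ^ 2 - ⟪(x k - f' (x k)) - (x 0 - f' (x 0)), J k - J 0⟫ := by
      rw [← real_inner_self_eq_norm_sq]
      simp only [inner_sub_left, inner_sub_right]
      ring
    have h3 := real_inner_le_norm ((x k - f' (x k)) - (x 0 - f' (x 0))) (J k - J 0)
    have h4 : ‖J k - J 0‖ * ‖J k - J 0‖ ≤
        ‖(x k - f' (x k)) - (x 0 - f' (x 0))‖ * ‖J k - J 0‖ := by nlinarith
    have h5 : ‖J k - J 0‖ ≤ ‖(x k - f' (x k)) - (x 0 - f' (x 0))‖ := by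
      rcases (norm_nonneg (J k - J 0)).eq_or_lt with h | h
      · rw [← h]; exact norm_nonneg _
      · exact le_of_mul_le_mul_right h4 h
    have h6 := norm_sub_le (x k - f' (x k)) (x 0 - f' (x 0))
    have h7 := norm_sub_le (x k) (f' (x k))
    have h8 : ‖J k‖ ≤ ‖J k - J 0‖ + ‖J 0‖ := by simpa using norm_add_le (J k - J 0) (J 0)
    linarith [hR k, hR' k]
  have hxJ : ∀ k, ‖x k - J k‖ ≤ R + Q := fun k => (norm_sub_le _ _).trans (add_le_add (hR k) (hQ k))
  -- the uniform continuity set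
  set A : Set E := D ∩ Metric.closedBall 0 (R + Q) with hAdef
  have hR0 : 0 ≤ R := (norm_nonneg _).trans (hR 0)
  have hQ0 : 0 ≤ Q := (norm_nonneg _).trans (hQ 0)
  have hUC := (hA A inter_subset_left (Metric.isBounded_closedBall.subset inter_subset_right)).1
  rw [Metric.uniformContinuousOn_iff] at hUC
  have hxA : ∀ k, x k ∈ A := fun k => ⟨hx k, by rw [mem_closedBall_zero_iff]; linarith [hR k]⟩
  have hJA : ∀ k, J k ∈ A := fun k => ⟨hJ k, by rw [mem_closedBall_zero_iff]; linarith [hQ k]⟩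
  have hAc : Convex ℝ A := hF.1.inter (convex_closedBall _ _)
  -- the minimizing sequence
  obtain ⟨u, huD, hux, hum⟩ : ∃ u : ℕ → E, (∀ k, u k ∈ D) ∧
      Tendsto (fun k => u k - x k) atTop (𝓝 0) ∧
      Tendsto (fun k => F (u k) + G (u k)) atTop (𝓝 m) := by
    rcases eq_or_ne ℓ m with hlm | hlm
    · exact ⟨x, hx, by simp, hlm ▸ hℓ⟩
    have hml : m < ℓ := lt_of_le_of_ne (ge_of_tendsto' hℓ fun k => hlow _ (hx k)) hlm.symm
    have hge : ∀ k, ℓ ≤ F (x k) + G (x k) := fun k => hphi.le_of_tendsto hℓ k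
    have hbt : Tendsto b atTop (𝓝 0) := by
      obtain ⟨a, ha⟩ := hacv z0 hz0
      have hd := (ha.sub (ha.comp (tendsto_add_atTop_nat 1))).div_const (2 * (ℓ - m))
      rw [sub_self, zero_div] at hd
      refine squeeze_zero (fun k => (hb0 k).le) (fun k => ?_) hd
      have h1 := hfej z0 hz0'.1 k
      rw [le_div_iff₀ (by linarith)]
      have h2 := mul_le_mul_of_nonneg_left (sub_le_sub_right (hge k) m) (hb0 k).le
      simp only [Function.comp_apply]
      linarith
    have hxJ0 : Tendsto (fun k => ‖x k - J k‖) atTop (𝓝 0) := by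
      rw [Metric.tendsto_atTop']
      intro ε hε
      obtain ⟨δ, hδ, hd⟩ := hUC (ε / 2) (by linarith)
      have h1 : ∀ᶠ k in atTop, b k < 1 := hbt.eventually_lt_const one_pos
      have h2 : ∀ᶠ k in atTop, b k / θ * (R + Q) < δ := by
        have := (hbt.div_const θ).mul_const (R + Q)
        rw [zero_div, zero_mul] at this
        exact this.eventually_lt_const hδ
      obtain ⟨N, hN⟩ := eventually_atTop.1 (h1.and h2)
      refine ⟨N, fun k hk => ?_⟩
      obtain ⟨hk1, hk2⟩ := hN k hk.le
      obtain ⟨hβ1, hnl⟩ := hnls k hk1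
      have hβ0 : 0 < b k / θ := div_pos (hb0 k) hθ
      set β := b k / θ with hβ
      unfold coreLS at hnl
      push Not at hnl
      have hcomb : x k - β • (x k - J k) = (1 - β) • x k + β • J k := by module
      have hyA : x k - β • (x k - J k) ∈ A := by
        rw [hcomb]; exact hAc (hxA k) (hJA k) (by linarith) hβ0.le (by ring)
      have hGc := hG.2 (hx k) (hJ k) (by linarith : 0 ≤ 1 - β) hβ0.le (by ring)
      rw [← hcomb] at hGc
      simp only [smul_eq_mul] at hGc
      set y := x k - β • (x k - J k) with hy
      have hFg := hgi y hyA.1 (x k) (hx k)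
      have e1 : x k - y = β • (x k - J k) := by rw [hy]; abel
      rw [e1, inner_smul_right] at hFg
      have h3 : β * (1 / 2 * ‖x k - J k‖ ^ 2) < β * ⟪f' (x k) - f' y, x k - J k⟫ := by
        rw [inner_sub_left]; nlinarith
      have h4 := lt_of_mul_lt_mul_left h3 hβ0.le
      have h5 := real_inner_le_norm (f' (x k) - f' y) (x k - J k)
      have h6 : ‖f' (x k) - f' y‖ < ε / 2 := by
        rw [← dist_eq_norm]
        refine hd _ (hxA k) _ hyA ?_
        rw [dist_eq_norm, e1, norm_smul, Real.norm_eq_abs, abs_of_pos hβ0]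
        exact (mul_le_mul_of_nonneg_left (hxJ k) hβ0.le).trans_lt hk2
      rw [dist_zero_right, norm_norm]
      have h7 : 0 ≤ ‖x k - J k‖ := norm_nonneg _
      by_contra hcon
      push Not at hcon
      nlinarith
    have hJx : Tendsto (fun k => J k - x k) atTop (𝓝 0) := by
      rw [tendsto_zero_iff_norm_tendsto_zero]
      simpa only [norm_sub_rev] using hxJ0
    refine ⟨J, hJ, hJx, ?_⟩
    have hfd : Tendsto (fun k => ‖f' (J k) - f' (x k)‖) atTop (𝓝 0) := by
      rw [Metric.tendsto_atTop]
      intro ε hε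
      obtain ⟨δ, hδ, hd⟩ := hUC ε hε
      obtain ⟨N, hN⟩ := eventually_atTop.1 (hxJ0.eventually_lt_const hδ)
      refine ⟨N, fun k hk => ?_⟩
      rw [dist_zero_right, norm_norm, ← dist_eq_norm, dist_comm]
      exact hd _ (hxA k) _ (hJA k) (by rw [dist_eq_norm]; exact hN k hk)
    have hup : Tendsto (fun k => m + (‖x k - J k‖ + ‖f' (J k) - f' (x k)‖) * (Q + ‖z0‖))
        atTop (𝓝 m) := by
      simpa using ((hxJ0.add hfd).mul_const (Q + ‖z0‖)).const_add m
    refine tendsto_of_tendsto_of_tendsto_of_le_of_le tendsto_const_nhds hup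
      (fun k => hlow _ (hJ k)) (fun k => ?_)
    have h1 := hprox k z0 hz0'.1
    have h2 := hgi (J k) (hJ k) z0 hz0'.1
    have e : ⟪x k - f' (x k) - J k, z0 - J k⟫ + ⟪f' (J k), z0 - J k⟫
      = - ⟪(x k - J k) + (f' (J k) - f' (x k)), J k - z0⟫ := by
      simp only [inner_sub_left, inner_sub_right, inner_add_left]
      ring
    have h3 := real_inner_le_norm ((x k - J k) + (f' (J k) - f' (x k))) (J k - z0)
    have h4 : ‖(x k - J k) + (f' (J k) - f' (x k))‖ * ‖J k - z0‖ ≤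
        (‖x k - J k‖ + ‖f' (J k) - f' (x k)‖) * (Q + ‖z0‖) :=
      mul_le_mul (norm_add_le _ _) ((norm_sub_le _ _).trans (by linarith [hQ k])) (norm_nonneg _)
        (by positivity)
    show F (J k) + G (J k) ≤ _
    linarith
  refine ⟨fun z hz => ⟨fun k => 2 * ((F (x k) + G (x k)) - (F (x (k+1)) + G (x (k+1)))),
    fun k => by linarith [hdec k], ?_, fun k => by linarith [hfej2 z hz k]⟩, ?_⟩
  · refine summable_of_sum_range_le (c := 2 * ((F (x 0) + G (x 0)) - m))
      (fun k => by linarith [hdec k]) (fun n => ?_)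
    rw [← Finset.mul_sum, Finset.sum_range_sub' (fun k => F (x k) + G (x k))]
    linarith [hlow _ (hx n)]
  · -- weak cluster points
    have hclus : ∀ (U : Ultrafilter ℕ), (U : Filter ℕ) ≤ atTop → ∀ p : E,
        (∀ y, Tendsto (fun k => ⟪x k, y⟫) U (𝓝 ⟪p, y⟫)) → p ∈ S := by
      intro U hU p hpw
      have huw : ∀ y, Tendsto (fun k => ⟪u k, y⟫) U (𝓝 ⟪p, y⟫) := by
        intro y
        have h1 : Tendsto (fun k => ⟪u k - x k, y⟫) U (𝓝 ⟪(0:E), y⟫) :=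
          (hux.mono_left hU).inner tendsto_const_nhds
        have h2 := h1.add (hpw y)
        rw [inner_zero_left, zero_add] at h2
        refine h2.congr fun k => ?_
        rw [← inner_add_left, sub_add_cancel]
      have hmem : ∀ c, m < c → p ∈ {x | x ∈ D ∧ F x + G x ≤ c} := by
        intro c hc
        refine core_closed_weak ((hF.add hG).convex_le c) (hcl c) huw ?_
        filter_upwards [(hum.mono_left hU).eventually_lt_const hc] with k hk
        exact ⟨huD k, hk.le⟩
      rw [hSdef]
      refine ⟨(hmem (m + 1) (by linarith)).1, fun y hy => ?_⟩
      exact (le_of_forall_gt_imp_ge_of_dense fun c hc => (hmem c hc).2).trans (hlow y hy)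
    obtain ⟨p, hpw⟩ := core_weak hR (Ultrafilter.of atTop)
    have hpS := hclus _ (Ultrafilter.of_le atTop) p hpw
    refine ⟨p, hpS, fun y => ?_⟩
    rw [tendsto_iff_ultrafilter]
    intro V hV
    obtain ⟨q, hqw⟩ := core_weak hR V
    have hqS := hclus V hV q hqw
    have hpq : p = q := by
      obtain ⟨a1, h1⟩ := hncv p hpS
      obtain ⟨a2, h2⟩ := hncv q hqS
      have h3 : Tendsto (fun k => ⟪x k, p - q⟫) atTop
          (𝓝 ((‖p‖ ^ 2 - ‖q‖ ^ 2 - (a1 - a2)) / 2)) := by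
        refine ((tendsto_const_nhds.sub (h1.sub h2)).div_const 2).congr fun k => ?_
        rw [norm_sub_sq_real, norm_sub_sq_real, inner_sub_right]
        ring
      have h4 := tendsto_nhds_unique (hpw (p - q)) (h3.mono_left (Ultrafilter.of_le atTop))
      have h5 := tendsto_nhds_unique (hqw (p - q)) (h3.mono_left hV)
      have h6 : ⟪p - q, p - q⟫ = 0 := by rw [inner_sub_left, h4, h5, sub_self]
      exact sub_eq_zero.1 (inner_self_eq_zero.1 h6)
    rw [hpq]
    exact hqw y
end core

/-- Theorem 5.1(i): under Assumptions A1–A2, if `S⁎ ≠ ∅` then the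
sequence generated by Method 3 (forward-backward with Linesearch 2) is quasi-Fejér
convergent to `S⁎` and converges weakly to a point of `S⁎`. -/
theorem stmt18
    (f g : H → EReal) (f' : H → H)
    (hf : ProperLscConvex f) (hg : ProperLscConvex g)
    (hdom : edom g ⊆ edom f)
    (hdiff : GradOnOpenSupset f f' (edom g))
    (hA2 : UCBddOnBounded g f')
    (θ : ℝ) (hθ : θ ∈ Set.Ioo (0 : ℝ) 1)
    (x Jseq : ℕ → H) (b : ℕ → ℝ)
    (hx0 : x 0 ∈ edom g)
    (hJ : ∀ k : ℕ, IsProxPt g 1 (x k - f' (x k)) (Jseq k))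
    (hls : ∀ k : ℕ, ∃ n : ℕ, b k = θ ^ n ∧
      LS2Ineq f g f' (x k) (Jseq k) (b k) ∧
      ∀ m : ℕ, m < n → ¬ LS2Ineq f g f' (x k) (Jseq k) (θ ^ m))
    (hiter : ∀ k : ℕ, x (k + 1) = x k - b k • (x k - Jseq k))
    (hS : (argminSet f g).Nonempty) :
    (∀ z ∈ argminSet f g, ∃ ε : ℕ → ℝ, (∀ k, 0 ≤ ε k) ∧ Summable ε ∧
        ∀ k : ℕ, ‖x (k + 1) - z‖ ^ 2 ≤ ‖x k - z‖ ^ 2 + ε k) ∧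
      ∃ p ∈ argminSet f g, ∀ y : H, Tendsto (fun k => ⟪x k, y⟫) atTop (nhds ⟪p, y⟫) := by
  obtain ⟨hθ0, hθ1⟩ := hθ
  obtain ⟨-, hfb, hfl, hfc⟩ := hf
  obtain ⟨⟨g0, hg0⟩, hgb, hgl, hgc⟩ := hg
  obtain ⟨U, hU, hDU, hgrad⟩ := hdiff
  set F : H → ℝ := fun y => (f y).toReal with hFdef
  set G : H → ℝ := fun y => (g y).toReal with hGdef
  have hfF : ∀ y ∈ edom g, f y = (F y : EReal) := fun y hy =>
    (EReal.coe_toReal (ne_of_lt (hdom hy)) (ne_of_gt (hfb y))).symm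
  have hgG : ∀ y ∈ edom g, g y = (G y : EReal) := fun y hy =>
    (EReal.coe_toReal (ne_of_lt hy) (ne_of_gt (hgb y))).symm
  have htop : ∀ y, y ∉ edom g → g y = ⊤ := fun y hy => by
    by_contra h
    exact hy (lt_top_iff_ne_top.2 h)
  have hDc : Convex ℝ (edom g) := by
    intro y hy z hz a c ha hc hac
    have h := hgc y z a c ha hc hac
    rw [hgG y hy, hgG z hz] at h
    exact lt_of_le_of_lt h (by exact_mod_cast EReal.coe_lt_top _)
  have hF : ConvexOn ℝ (edom g) F := by
    refine ⟨hDc, fun y hy z hz a c ha hc hac => ?_⟩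
    have h := hfc y z a c ha hc hac
    rw [hfF y hy, hfF z hz, hfF _ (hDc hy hz ha hc hac)] at h
    simp only [smul_eq_mul]
    exact_mod_cast h
  have hG : ConvexOn ℝ (edom g) G := by
    refine ⟨hDc, fun y hy z hz a c ha hc hac => ?_⟩
    have h := hgc y z a c ha hc hac
    rw [hgG y hy, hgG z hz, hgG _ (hDc hy hz ha hc hac)] at h
    simp only [smul_eq_mul]
    exact_mod_cast h
  have hJD : ∀ k, Jseq k ∈ edom g := by
    intro k
    by_contra hn
    have h := hJ k g0
    rw [htop _ hn, hgG g0 hg0, EReal.top_add_coe, ← EReal.coe_add] at h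
    exact absurd h (not_le.2 (EReal.coe_lt_top _))
  have hb0 : ∀ k, 0 < b k := fun k => by
    obtain ⟨n, hn, -⟩ := hls k
    rw [hn]; positivity
  have hb1 : ∀ k, b k ≤ 1 := fun k => by
    obtain ⟨n, hn, -⟩ := hls k
    rw [hn]; exact pow_le_one₀ hθ0.le hθ1.le
  have hstep : ∀ k (β : ℝ), x k ∈ edom g → 0 ≤ β → β ≤ 1 →
      x k - β • (x k - Jseq k) ∈ edom g := by
    intro k β hk h0 h1
    have := hDc hk (hJD k) (by linarith : 0 ≤ 1 - β) h0 (by ring)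
    convert this using 1
    module
  have hxD : ∀ k, x k ∈ edom g := by
    intro k
    induction k with
    | zero => exact hx0
    | succ k ih => rw [hiter]; exact hstep k _ ih (hb0 k).le (hb1 k)
  have hlsiff : ∀ k (β : ℝ), 0 ≤ β → β ≤ 1 →
      (LS2Ineq f g f' (x k) (Jseq k) β ↔ coreLS F G f' (x k) (Jseq k) β) := by
    intro k β h0 h1
    unfold LS2Ineq coreLS
    have hs := hstep k β (hxD k) h0 h1
    rw [hfF _ hs, hgG _ hs, hfF _ (hxD k), hgG _ (hxD k), hgG _ (hJD k)]
    norm_cast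
  refine core_main (D := edom g) (F := F) (G := G) (f' := f') (θ := θ) (J := Jseq) (b := b)
    hF hG ?_ ?_ hA2 hθ0 hxD hJD ?_ hb0 hb1 ?_ ?_ hiter ?_ hS
  · intro c
    have hl : LowerSemicontinuous fun y => f y + g y := by
      refine hfl.add' hgl fun y => EReal.continuousAt_add ?_ ?_
      · right; exact ne_of_gt (hgb y)
      · left; exact ne_of_gt (hfb y)
    have : {y | y ∈ edom g ∧ F y + G y ≤ c} = (fun y => f y + g y) ⁻¹' Iic (c : EReal) := by
      ext y
      simp only [mem_setOf_eq, mem_preimage, mem_Iic]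
      constructor
      · rintro ⟨hy, h⟩
        rw [hfF y hy, hgG y hy]
        exact_mod_cast h
      · intro h
        have hy : y ∈ edom g := by
          by_contra hn
          rw [htop y hn, EReal.add_top_of_ne_bot (ne_of_gt (hfb y))] at h
          exact absurd h (not_le.2 (EReal.coe_lt_top _))
        rw [hfF y hy, hgG y hy] at h
        exact ⟨hy, by exact_mod_cast h⟩
    rw [this]
    exact hl.isClosed_preimage _
  · intro y hy
    exact (hgrad y (hDU hy)).2.hasFDerivAt
  · intro k y hy
    have h := hJ k y
    rw [hgG _ (hJD k), hgG y hy] at h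
    have h' : G (Jseq k) + 1 / (2 * 1) * ‖Jseq k - (x k - f' (x k))‖ ^ 2 ≤
      G y + 1 / (2 * 1) * ‖y - (x k - f' (x k))‖ ^ 2 := by exact_mod_cast h
    simpa only [mul_one] using h'
  · intro k
    obtain ⟨n, hn, h, -⟩ := hls k
    exact (hlsiff k _ (hb0 k).le (hb1 k)).1 h
  · intro k hk
    obtain ⟨n, hn, -, h⟩ := hls k
    rcases n with _ | n
    · rw [hn, pow_zero] at hk
      exact absurd hk (lt_irrefl _)
    have e : b k / θ = θ ^ n := by rw [hn, pow_succ, mul_div_assoc, div_self hθ0.ne', mul_one]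
    have e1 : θ ^ n ≤ 1 := pow_le_one₀ hθ0.le hθ1.le
    rw [e]
    exact ⟨e1, fun hc => h n (Nat.lt_succ_self n) ((hlsiff k _ (by positivity) e1).2 hc)⟩
  · intro z
    constructor
    · intro hz
      have hzD : z ∈ edom g := by
        by_contra hn
        have h := hz (x 0)
        rw [htop z hn, EReal.add_top_of_ne_bot (ne_of_gt (hfb z)), hfF _ hx0, hgG _ hx0,
          ← EReal.coe_add] at h
        exact absurd h (not_le.2 (EReal.coe_lt_top _))
      refine ⟨hzD, fun y hy => ?_⟩
      have h := hz y
      rw [hfF _ hzD, hgG _ hzD, hfF y hy, hgG y hy] at h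
      exact_mod_cast h
    · rintro ⟨hzD, hz⟩ y
      by_cases hy : y ∈ edom g
      · rw [hfF _ hzD, hgG _ hzD, hfF y hy, hgG y hy]
        exact_mod_cast hz y hy
      · rw [htop y hy, EReal.add_top_of_ne_bot (ne_of_gt (hfb y))]
        exact le_top
end
end
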